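/- arXiv:2006.16213 — 2 statements merged into one kernel-verified Lean document; each statement's English description precedes it below -/
import Mathlib

section
/- Let F : [0,∞) → [0,∞) be non-constant. Then the sequence F∘a := (F(a_n))_{n∈ℤ} is a Pólya frequency sequence for every Pólya frequency sequence a = (a_n)_{n∈ℤ} if and only if F(x) = c·x for some c > 0. -/
/-- A kernel on linearly ordered sets is totally non-negative if all matrices
obtained by evaluating it on increasing tuples have non-negative determinant. -/
def IsTNKernel {X Y : Type*} [LinearOrder X] [LinearOrder Y] (K : X → Y → ℝ) : Prop :=
  ∀ (n : ℕ) (x : Fin n → X) (y : Fin n → Y), StrictMono x → StrictMono y →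
    0 ≤ (Matrix.of fun i j : Fin n => K (x i) (y j)).det

/-- A Pólya frequency sequence: a bi-infinite real sequence whose associated
Toeplitz kernel on `ℤ × ℤ` is totally non-negative. -/
def IsPolyaFrequencySeq (a : ℤ → ℝ) : Prop :=
  IsTNKernel fun i j : ℤ => a (i - j)

/-!
Write `b n = F (x * r ^ n)`. Total nonnegativity of `F ∘ a` for one-sided geometric `a` gives
`b k * b (k + 2) ≤ b (k + 1) ^ 2`, and a `3 × 3` minor shows that a relative error `ε` in this
inequality at `k` becomes at most `2 * ε ^ 2` at `k + 1`. For ratios `r` close to `1` the error is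
small somewhere by pigeonhole, hence negligible after a few more steps; letting `r → 1` turns the
inequality into an equality. So `F` is multiplicative up to a constant, and being monotone it is
`c * x ^ α`.

Preservers of the form `x ^ α` are closed under iteration. The sequence `1, 2, 1` forces
`1 / 2 ≤ α`, so applying this to `α ^ k` excludes `α < 1`. If `1 < α`, iterating on
`(1 - δ) ^ n * (1 + n * δ)`, whose logarithm is `-(n * (n + 1) / 2) * δ ^ 2` to leading order,
yields in the limit that `y ^ (n * (n + 1) / 2)` for `0 ≤ n`, continued by `1` to `n < 0`, is a
Pólya frequency sequence for every `0 < y < 1`; at `y = 9 / 10` it has a negative `4 × 4` minor.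
-/

open Filter Finset Topology

section TotallyNonnegativeKernels

variable {X Y : Type*} [LinearOrder X] [LinearOrder Y] {K : X → Y → ℝ}

theorem IsTNKernel.nonneg (hK : IsTNKernel K) (x : X) (y : Y) : 0 ≤ K x y := by
  simpa using hK 1 (fun _ => x) (fun _ => y) (Subsingleton.strictMono _) (Subsingleton.strictMono _)

theorem IsTNKernel.flip (hK : IsTNKernel K) : IsTNKernel fun y x => K x y := by
  intro n y x hy hx
  rw [← Matrix.det_transpose]
  exact hK n x y hx hy

theorem IsTNKernel.const_mul (hK : IsTNKernel K) {c : ℝ} (hc : 0 ≤ c) :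
    IsTNKernel fun x y => c * K x y := by
  intro n x y hx hy
  change 0 ≤ (c • Matrix.of fun i j => K (x i) (y j)).det
  rw [Matrix.det_smul]
  exact mul_nonneg (pow_nonneg hc _) (hK n x y hx hy)

theorem IsTNKernel.of_tendsto {ι : Type*} {l : Filter ι} [l.NeBot] {k : ι → X → Y → ℝ}
    (hk : ∀ᶠ i in l, IsTNKernel (k i)) (hlim : ∀ x y, Tendsto (fun i => k i x y) l (𝓝 (K x y))) :
    IsTNKernel K := by
  intro n x y hx hy
  have hmat : Tendsto (fun i => Matrix.of fun p q => k i (x p) (y q)) l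
      (𝓝 (Matrix.of fun p q => K (x p) (y q))) :=
    tendsto_pi_nhds.2 fun p => tendsto_pi_nhds.2 fun q => hlim (x p) (y q)
  exact ge_of_tendsto ((continuous_id.matrix_det.tendsto _).comp hmat)
    (hk.mono fun i hi => hi n x y hx hy)

/- Expanding the determinant in the rows leaves minors of `K` whose row indices are weakly
increasing; the ones with a repeated index vanish. -/
theorem IsTNKernel.det_sum_rows_nonneg (hK : IsTNKernel K) {ι : Type*} {n : ℕ}
    {S : Fin n → Finset ι} {w : Fin n → ι → ℝ} {x : Fin n → ι → X} {y : Fin n → Y}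
    (hw : ∀ i k, 0 ≤ w i k) (hx : ∀ i j, i < j → ∀ k ∈ S i, ∀ l ∈ S j, x i k ≤ x j l)
    (hy : StrictMono y) :
    0 ≤ (Matrix.of fun i j => ∑ k ∈ S i, w i k * K (x i k) (y j)).det := by
  classical
  have hexpand : (Matrix.of fun i j => ∑ k ∈ S i, w i k * K (x i k) (y j)).det =
      Matrix.detRowAlternating.toMultilinearMap
        fun i => ∑ k ∈ S i, w i k • fun j => K (x i k) (y j) := by
    change _ = Matrix.det _
    congr 1
    ext i j
    simp [Finset.sum_apply]
  rw [hexpand, MultilinearMap.map_sum_finset]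
  refine sum_nonneg fun s hs => ?_
  rw [Fintype.mem_piFinset] at hs
  rw [MultilinearMap.map_smul_univ, smul_eq_mul]
  refine mul_nonneg (prod_nonneg fun i _ => hw i _) ?_
  change 0 ≤ (Matrix.of fun i j => K (x i (s i)) (y j)).det
  by_cases hinj : Function.Injective fun i => x i (s i)
  · have hmono : Monotone fun i => x i (s i) := fun i j hij => by
      rcases hij.eq_or_lt with rfl | hlt
      · rfl
      · exact hx i j hlt _ (hs i) _ (hs j)
    exact hK n _ y (hmono.strictMono_of_injective hinj) hy
  · obtain ⟨i, j, hij, hne⟩ := Function.not_injective_iff.1 hinj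
    refine (Matrix.det_zero_of_row_eq hne ?_).ge
    ext q
    exact congrArg (K · (y q)) hij

end TotallyNonnegativeKernels

section GeometricFilter

variable {a c : ℤ → ℝ} {r : ℝ}

theorem eq_sum_add_of_recurrence (hc : ∀ n, c n = a n + r * c (n - 1)) (m : ℕ) (n : ℤ) :
    c n = ∑ k ∈ range m, r ^ k * a (n - k) + r ^ m * c (n - m) := by
  induction m with
  | zero => simp
  | succ m ih =>
    rw [ih, sum_range_succ, hc (n - m), Nat.cast_succ, ← sub_sub, pow_succ]
    ring

/-- The gap between two consecutive terms of an increasing integer tuple. -/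
def gap {n : ℕ} (x : Fin (n + 1) → ℤ) (i : Fin n) : ℕ := (x i.succ - x i.castSucc).toNat

theorem natCast_gap {n : ℕ} {x : Fin (n + 1) → ℤ} (hx : StrictMono x) (i : Fin n) :
    (gap x i : ℤ) = x i.succ - x i.castSucc :=
  Int.toNat_of_nonneg (sub_nonneg.2 (hx i.castSucc_lt_succ).le)

theorem IsPolyaFrequencySeq.det_truncated_rows_nonneg (ha : IsPolyaFrequencySeq a) (hr : 0 ≤ r)
    {n : ℕ} {x y : Fin (n + 1) → ℤ} (hx : StrictMono x) (hy : StrictMono y) (m : ℕ) :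
    0 ≤ (Matrix.of fun i j => ∑ k ∈ range ((Fin.cons m (gap x) : Fin (n + 1) → ℕ) i),
      r ^ k * a (x i - y j - k)).det := by
  have hrows : ∀ i j, i < j → ∀ k ∈ range ((Fin.cons m (gap x) : Fin (n + 1) → ℕ) i),
      ∀ l ∈ range ((Fin.cons m (gap x) : Fin (n + 1) → ℕ) j), x i - (k : ℤ) ≤ x j - l := by
    intro i j hij k _ l hl
    obtain ⟨j, rfl⟩ := Fin.exists_succ_eq_of_ne_zero (Fin.ne_zero_of_lt hij)
    have hle : x i ≤ x j.castSucc := hx.monotone (Fin.le_castSucc_iff.2 hij)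
    have hgap := natCast_gap hx j
    rw [Fin.cons_succ, mem_range] at hl
    lia
  simpa only [sub_right_comm] using
    IsTNKernel.det_sum_rows_nonneg ha (w := fun _ k => r ^ k) (fun _ _ => pow_nonneg hr _) hrows hy

theorem det_toeplitz_eq_of_recurrence (hc : ∀ n, c n = a n + r * c (n - 1)) {n : ℕ}
    {x : Fin (n + 1) → ℤ} (hx : StrictMono x) (y : Fin (n + 1) → ℤ) :
    (Matrix.of fun i j => c (x i - y j)).det =
      (Matrix.of (Fin.cons (fun j => c (x 0 - y j)) fun i j =>
        ∑ k ∈ range (gap x i), r ^ k * a (x i.succ - y j - k)) :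
        Matrix (Fin (n + 1)) (Fin (n + 1)) ℝ).det := by
  refine Matrix.det_eq_of_forall_row_eq_smul_add_pred (fun i => r ^ gap x i) (fun _ => rfl) ?_
  intro i j
  simp only [Matrix.of_apply, Fin.cons_succ]
  rw [eq_sum_add_of_recurrence hc (gap x i), natCast_gap hx]
  ring_nf

theorem IsPolyaFrequencySeq.of_recurrence (ha : IsPolyaFrequencySeq a) (hr : 0 ≤ r)
    (hc : ∀ n, c n = a n + r * c (n - 1))
    (hlim : ∀ n : ℤ, Tendsto (fun m : ℕ => r ^ m * c (n - m)) atTop (𝓝 0)) :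
    IsPolyaFrequencySeq c := by
  intro n x y hx hy
  rcases n with _ | n
  · simp
  have hsum (z : ℤ) :
      Tendsto (fun m => ∑ k ∈ range m, r ^ k * a (z - k)) atTop (𝓝 (c z)) := by
    simpa using (tendsto_const_nhds.sub (hlim z)).congr fun m =>
      (eq_sub_of_add_eq (eq_sum_add_of_recurrence hc m z).symm).symm
  rw [det_toeplitz_eq_of_recurrence hc hx]
  have hmat : Tendsto (fun m : ℕ => Matrix.of fun i j =>
      ∑ k ∈ range ((Fin.cons m (gap x) : Fin (n + 1) → ℕ) i), r ^ k * a (x i - y j - k)) atTop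
      (𝓝 (Matrix.of (Fin.cons (fun j => c (x 0 - y j)) fun i j =>
        ∑ k ∈ range (gap x i), r ^ k * a (x i.succ - y j - k)))) := by
    refine tendsto_pi_nhds.2 fun i => tendsto_pi_nhds.2 fun j => ?_
    cases i using Fin.cases with
    | zero => exact hsum (x 0 - y j)
    | succ i => exact tendsto_const_nhds
  exact ge_of_tendsto' ((continuous_id.matrix_det.tendsto _).comp hmat)
    fun m => ha.det_truncated_rows_nonneg hr hx hy m

end GeometricFilter

section BasicSequences

variable {a b : ℤ → ℝ}

theorem isTNKernel_ite_eq {X : Type*} [LinearOrder X] :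
    IsTNKernel fun x y : X => if x = y then (1 : ℝ) else 0 := by
  intro n x y hx hy
  by_cases hrange : Set.range x ⊆ Set.range y
  · have hcard : (Set.range y).ncard ≤ (Set.range x).ncard := by
      rw [Set.ncard_range_of_injective hx.injective, Set.ncard_range_of_injective hy.injective]
    obtain rfl := (hx.range_inj hy).1
      (Set.eq_of_subset_of_ncard_le hrange hcard (Set.finite_range y))
    have hone : (Matrix.of fun i j => if x i = x j then (1 : ℝ) else 0) = 1 := by
      ext i j
      simp only [Matrix.of_apply, Matrix.one_apply, hx.injective.eq_iff]
    rw [hone, Matrix.det_one]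
    exact zero_le_one
  · obtain ⟨_, ⟨i, rfl⟩, hi⟩ := Set.not_subset.1 hrange
    exact (Matrix.det_eq_zero_of_row_eq_zero i fun j => if_neg fun h => hi ⟨j, h.symm⟩).ge

namespace IsPolyaFrequencySeq

theorem nonneg (ha : IsPolyaFrequencySeq a) (n : ℤ) : 0 ≤ a n := by
  simpa using IsTNKernel.nonneg ha n 0

theorem const_mul (ha : IsPolyaFrequencySeq a) {c : ℝ} (hc : 0 ≤ c) :
    IsPolyaFrequencySeq fun n => c * a n :=
  IsTNKernel.const_mul ha hc

theorem reflect (ha : IsPolyaFrequencySeq a) : IsPolyaFrequencySeq fun n => a (-n) := by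
  simpa only [IsPolyaFrequencySeq, neg_sub] using IsTNKernel.flip ha

theorem ite_eq_zero : IsPolyaFrequencySeq fun n => if n = 0 then 1 else 0 := by
  simpa only [IsPolyaFrequencySeq, sub_eq_zero] using isTNKernel_ite_eq (X := ℤ)

theorem add_mul_shift (ha : IsPolyaFrequencySeq a) {u : ℝ} (hu : 0 ≤ u) :
    IsPolyaFrequencySeq fun n => a n + u * a (n - 1) := by
  intro n x y hx hy
  have hrows : ∀ i j, i < j → ∀ k ∈ range 2, ∀ l ∈ range 2, x i - (k : ℤ) ≤ x j - l := by
    intro i j hij k _ l hl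
    have hlt := hx hij
    rw [mem_range] at hl
    lia
  simpa [sum_range_succ, sub_right_comm] using
    IsTNKernel.det_sum_rows_nonneg ha (w := fun _ k => u ^ k) (fun _ _ => pow_nonneg hu _) hrows hy

theorem toeplitz_minor_nonneg (hb : IsPolyaFrequencySeq b) (k : ℕ) (m : ℤ) :
    0 ≤ (Matrix.of fun i j : Fin k => b (m + (i : ℕ) - (j : ℕ))).det :=
  hb k (fun i => m + (i : ℕ)) (fun j => (j : ℕ))
    (fun _ _ h => add_lt_add_right (Int.ofNat_lt.2 h) m) fun _ _ h => Int.ofNat_lt.2 h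

theorem mul_le_sq (hb : IsPolyaFrequencySeq b) (n : ℤ) : b (n - 1) * b (n + 1) ≤ b n ^ 2 := by
  have hdet := hb.toeplitz_minor_nonneg 2 n
  simp only [Matrix.det_fin_two, Fin.isValue, Matrix.of_apply, Fin.coe_ofNat_eq_mod, Nat.zero_mod,
    Nat.cast_zero, add_zero, sub_zero, Nat.mod_succ, Nat.cast_one, add_sub_cancel_right] at hdet
  linarith

theorem two_mul_le_of_neg_one_eq_zero (hb : IsPolyaFrequencySeq b) (h0 : b (-1) = 0) :
    2 * (b 0 * b 1 * b 2) ≤ b 1 ^ 3 + b 0 ^ 2 * b 3 := by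
  have hdet := hb.toeplitz_minor_nonneg 3 1
  simp only [Matrix.det_fin_three, Fin.isValue, Matrix.of_apply, Fin.coe_ofNat_eq_mod, Nat.zero_mod,
    Nat.cast_zero, add_zero, sub_zero, Nat.one_mod, Nat.cast_one, Int.reduceAdd, Int.reduceSub,
    Nat.mod_succ, Nat.cast_ofNat, sub_self, h0, zero_mul] at hdet
  linarith

end IsPolyaFrequencySeq

/-- The extension by zero of a sequence on `ℕ` to a sequence on `ℤ`. -/
def oneSided (b : ℕ → ℝ) (n : ℤ) : ℝ := if 0 ≤ n then b n.toNat else 0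

theorem oneSided_of_nonneg (b : ℕ → ℝ) {n : ℤ} (hn : 0 ≤ n) : oneSided b n = b n.toNat := if_pos hn

theorem oneSided_of_neg (b : ℕ → ℝ) {n : ℤ} (hn : n < 0) : oneSided b n = 0 := if_neg hn.not_ge

theorem IsPolyaFrequencySeq.oneSided_pow {r : ℝ} (hr : 0 ≤ r) :
    IsPolyaFrequencySeq (oneSided fun n => r ^ n) := by
  refine ite_eq_zero.of_recurrence hr (fun n => ?_) fun n => ?_
  · rcases lt_trichotomy n 0 with hn | rfl | hn
    · rw [oneSided_of_neg _ hn, oneSided_of_neg _ (by lia), if_neg hn.ne, mul_zero, add_zero]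
    · simp [oneSided]
    · rw [oneSided_of_nonneg _ hn.le, oneSided_of_nonneg _ (by lia), if_neg hn.ne',
        show n.toNat = (n - 1).toNat + 1 by lia]
      ring
  · refine tendsto_const_nhds.congr' ?_
    filter_upwards [eventually_gt_atTop n.toNat] with m hm
    rw [oneSided_of_neg _ (by lia), mul_zero]

theorem IsPolyaFrequencySeq.pow_mul_pow {q r : ℝ} (hq : 0 ≤ q) (hr : 0 ≤ r) (hqr : q * r < 1) :
    IsPolyaFrequencySeq fun n => q ^ (-n).toNat * r ^ n.toNat := by
  refine ((oneSided_pow hq).reflect.const_mul (sub_nonneg.2 hqr.le)).of_recurrence hr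
    (fun n => ?_) fun n => ?_
  · rcases le_or_gt n 0 with hn | hn
    · rw [oneSided_of_nonneg _ (by lia), Int.toNat_of_nonpos hn,
        show (n - 1).toNat = 0 by lia, show (-(n - 1)).toNat = (-n).toNat + 1 by lia]
      ring
    · rw [oneSided_of_neg _ (by lia), show (-n).toNat = 0 by lia,
        show (-(n - 1)).toNat = 0 by lia, show n.toNat = (n - 1).toNat + 1 by lia]
      ring
  · rw [← tendsto_add_atTop_iff_nat n.toNat]
    have hgeom := (tendsto_pow_atTop_nhds_zero_of_lt_one (mul_nonneg hq hr) hqr).const_mul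
      (r ^ n.toNat * q ^ (-n).toNat)
    rw [mul_zero] at hgeom
    refine hgeom.congr fun m => ?_
    have hneg : (-(n - ((m + n.toNat : ℕ) : ℤ))).toNat = m + (-n).toNat := by lia
    have hpos : (n - ((m + n.toNat : ℕ) : ℤ)).toNat = 0 := by lia
    rw [hneg, hpos]
    ring

theorem IsPolyaFrequencySeq.one_sub_pow_mul_one_add {δ : ℝ} (hδ : 0 < δ) (hδ1 : δ ≤ 1) :
    IsPolyaFrequencySeq fun n => (1 - δ) ^ n.toNat * (1 + n.toNat * δ) := by
  have hr : 0 ≤ 1 - δ := sub_nonneg.2 hδ1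
  have hr1 : 1 - δ < 1 := sub_lt_self 1 hδ
  have hpow : IsPolyaFrequencySeq fun n => (1 - δ) ^ n.toNat := by
    simpa using pow_mul_pow zero_le_one hr (by rwa [one_mul])
  refine (hpow.const_mul hδ.le).of_recurrence hr (fun n => ?_) fun n => ?_
  · rcases le_or_gt n 0 with hn | hn
    · simp [Int.toNat_of_nonpos hn, Int.toNat_of_nonpos (by lia : n - 1 ≤ 0)]
    · rw [show n.toNat = (n - 1).toNat + 1 by lia]
      push_cast
      ring
  · refine (tendsto_pow_atTop_nhds_zero_of_lt_one hr hr1).congr' ?_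
    filter_upwards [eventually_ge_atTop n.toNat] with m hm
    simp [Int.toNat_of_nonpos (by lia : n - m ≤ 0)]

end BasicSequences

/-- The property of a real function, relevant only on `[0, ∞)`, that applying it termwise to a
Pólya frequency sequence yields a Pólya frequency sequence. -/
def PreservesPolyaFrequency (F : ℝ → ℝ) : Prop :=
  ∀ a : ℤ → ℝ, IsPolyaFrequencySeq a → IsPolyaFrequencySeq fun n => F (a n)

namespace PreservesPolyaFrequency

variable {F : ℝ → ℝ} {x y : ℝ}

theorem ite_eq_zero (hF : PreservesPolyaFrequency F) (hx : 0 ≤ x) :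
    IsPolyaFrequencySeq fun n => F (x * if n = 0 then 1 else 0) :=
  hF _ (IsPolyaFrequencySeq.ite_eq_zero.const_mul hx)

theorem nonneg (hF : PreservesPolyaFrequency F) (hx : 0 ≤ x) : 0 ≤ F x := by
  simpa using (hF.ite_eq_zero hx).nonneg 0

theorem map_eq_map_zero (hF : PreservesPolyaFrequency F) (h0 : F 0 ≠ 0) (hx : 0 ≤ x) :
    F x = F 0 := by
  have hpos : 0 < F 0 := (hF.nonneg le_rfl).lt_of_ne' h0
  have hsq : F 0 ^ 2 ≤ F x ^ 2 := by simpa [← sq] using (hF.ite_eq_zero hx).mul_le_sq 0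
  have hmul : F x * F 0 ≤ F 0 * F 0 := by simpa [sq] using (hF.ite_eq_zero hx).mul_le_sq 1
  exact (le_of_mul_le_mul_right hmul hpos).antisymm (le_of_sq_le_sq hsq (hF.nonneg hx))

theorem map_zero (hF : PreservesPolyaFrequency F)
    (hne : ∃ x y, 0 ≤ x ∧ 0 ≤ y ∧ F x ≠ F y) : F 0 = 0 := by
  obtain ⟨x, y, hx, hy, hxy⟩ := hne
  by_contra h0
  exact hxy ((hF.map_eq_map_zero h0 hx).trans (hF.map_eq_map_zero h0 hy).symm)

theorem monotoneOn (hF : PreservesPolyaFrequency F) : MonotoneOn F (Set.Ici 0) := by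
  intro x hx y hy hxy
  rw [Set.mem_Ici] at hx hy
  rcases hxy.eq_or_lt with rfl | hlt
  · rfl
  have hy0 : 0 < y := hx.trans_lt hlt
  have hr : 0 ≤ x / y := div_nonneg hx hy
  have hr1 : x / y < 1 := (div_lt_one hy0).2 hlt
  have hminor := (hF _ ((IsPolyaFrequencySeq.pow_mul_pow hr hr
    (mul_lt_one_of_nonneg_of_lt_one_left hr hr1 hr1.le)).const_mul hy)).mul_le_sq 0
  have hsq : F x ^ 2 ≤ F y ^ 2 := by
    simpa [mul_div_cancel₀ x hy0.ne', ← sq] using hminor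
  exact le_of_sq_le_sq hsq (hF.nonneg hy)

end PreservesPolyaFrequency

section NearlyGeometric

/-- A sequence on `ℕ` all of whose tails, extended by zero, are Pólya frequency sequences. -/
def HasPolyaFrequencyTails (b : ℕ → ℝ) : Prop :=
  ∀ k, IsPolyaFrequencySeq (oneSided fun n => b (k + n))

/-- The terms of index `k`, `k + 1`, `k + 2` are in geometric progression up to a relative
error `ε`. -/
def NearlyGeometricAt (b : ℕ → ℝ) (ε : ℝ) (k : ℕ) : Prop :=
  0 < b k ∧ 0 < b (k + 1) ∧ (1 - ε) * b (k + 1) ^ 2 ≤ b k * b (k + 2)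

variable {b : ℕ → ℝ} {ε : ℝ} {k : ℕ}

namespace HasPolyaFrequencyTails

theorem mul_le_sq (hb : HasPolyaFrequencyTails b) (k : ℕ) : b k * b (k + 2) ≤ b (k + 1) ^ 2 := by
  simpa [oneSided] using (hb k).mul_le_sq 1

theorem two_mul_le (hb : HasPolyaFrequencyTails b) (k : ℕ) :
    2 * (b k * b (k + 1) * b (k + 2)) ≤ b (k + 1) ^ 3 + b k ^ 2 * b (k + 3) := by
  simpa [oneSided] using (hb k).two_mul_le_of_neg_one_eq_zero (by simp [oneSided])

end HasPolyaFrequencyTails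

namespace NearlyGeometricAt

theorem mono {δ : ℝ} (h : NearlyGeometricAt b ε k) (hεδ : ε ≤ δ) : NearlyGeometricAt b δ k :=
  ⟨h.1, h.2.1, (mul_le_mul_of_nonneg_right (by linarith) (sq_nonneg _)).trans h.2.2⟩

theorem pos_add_two (hε : ε < 1) (h : NearlyGeometricAt b ε k) : 0 < b (k + 2) := by
  obtain ⟨h₀, h₁, hgeom⟩ := h
  exact pos_of_mul_pos_right ((mul_pos (sub_pos.2 hε) (pow_pos h₁ 2)).trans_le hgeom) h₀.le

theorem succ (hb : HasPolyaFrequencyTails b) (hε : ε ≤ 1 / 4)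
    (h : NearlyGeometricAt b ε k) : NearlyGeometricAt b (2 * ε ^ 2) (k + 1) := by
  have h₂ := h.pos_add_two (by linarith)
  obtain ⟨h₀, h₁, hgeom⟩ := h
  have hlog := hb.mul_le_sq k
  have hcubic := mul_le_mul_of_nonneg_right (hb.two_mul_le k) h₁.le
  refine ⟨h₁, h₂, le_of_mul_le_mul_left ?_ (pow_pos h₀ 2)⟩
  set p := b k * b (k + 2)
  set s := b (k + 1) ^ 2
  have hdefect : (s - p) ^ 2 ≤ (ε * s) ^ 2 :=
    pow_le_pow_left₀ (sub_nonneg.2 hlog) (by linarith) 2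
  have hs : 0 < s := pow_pos h₁ 2
  have hsp : s ^ 2 ≤ 2 * p ^ 2 := by
    have hlin : 3 * s ≤ 4 * p := by nlinarith
    nlinarith [hlin]
  calc b k ^ 2 * ((1 - 2 * ε ^ 2) * b (k + 2) ^ 2)
      = p ^ 2 - ε ^ 2 * (2 * p ^ 2) := by ring
    _ ≤ p ^ 2 - ε ^ 2 * s ^ 2 := by gcongr
    _ ≤ p ^ 2 - (s - p) ^ 2 := by linarith
    _ = 2 * (p * s) - s ^ 2 := by ring
    _ ≤ b k ^ 2 * (b (k + 1) * b (k + 3)) := by linarith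

theorem of_add_two_le (hb : HasPolyaFrequencyTails b) (hε0 : 0 ≤ ε) (hε : ε ≤ 1 / 4)
    (h : NearlyGeometricAt b ε k) {n : ℕ} (hn : k + 2 ≤ n) :
    NearlyGeometricAt b (8 * ε ^ 4) n := by
  have hε2 : ε ^ 2 ≤ 1 / 16 := by nlinarith
  have hδ : 8 * ε ^ 4 ≤ 1 / 4 := by nlinarith
  have hδ0 : 0 ≤ 8 * ε ^ 4 := by positivity
  induction n, hn using Nat.le_induction with
  | base => exact ((h.succ hb hε).succ hb (by linarith)).mono (by linarith)
  | succ n _ ih => exact (ih.succ hb hδ).mono (by nlinarith [hδ0])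

theorem two_mul_log_sub_le (hε0 : 0 ≤ ε) (hε : ε ≤ 1 / 2) (h : NearlyGeometricAt b ε k) :
    2 * Real.log (b (k + 1)) - Real.log (b k) - Real.log (b (k + 2)) ≤ 2 * ε := by
  have h₂ := h.pos_add_two (by linarith)
  obtain ⟨h₀, h₁, hgeom⟩ := h
  set t := b k * b (k + 2) / b (k + 1) ^ 2 with ht
  have ht0 : 0 < t := by positivity
  have hε_le : 1 - ε ≤ t := (le_div_iff₀ (pow_pos h₁ 2)).2 hgeom
  have hinv : t⁻¹ ≤ 1 + 2 * ε := by
    rw [inv_le_iff_one_le_mul₀ ht0]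
    nlinarith
  have hlog : Real.log t =
      Real.log (b k) + Real.log (b (k + 2)) - 2 * Real.log (b (k + 1)) := by
    rw [ht, Real.log_div (by positivity) (by positivity), Real.log_mul h₀.ne' h₂.ne', Real.log_pow]
    norm_num
  linarith [Real.one_sub_inv_le_log_of_pos ht0]

end NearlyGeometricAt

theorem exists_nearlyGeometricAt (hanti : Antitone b) {N : ℕ} (hN : N ≠ 0) (hpos : 0 < b (N + 1))
    (hlog : Real.log (b 1) - Real.log (b (N + 1)) ≤ N * ε) :
    ∃ k < N, NearlyGeometricAt b ε k := by
  have hb {i : ℕ} (hi : i ≤ N + 1) : 0 < b i := hpos.trans_le (hanti hi)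
  have hsum : ∑ i ∈ range N, (Real.log (b (i + 1)) - Real.log (b (i + 2))) ≤
      ∑ _i ∈ range N, ε := by
    rw [sum_range_sub' fun i => Real.log (b (i + 1))]
    simpa using hlog
  obtain ⟨j, hj, hle⟩ := exists_le_of_sum_le (nonempty_range_iff.2 hN) hsum
  rw [mem_range] at hj
  have h₁ := hb (by lia : j + 1 ≤ N + 1)
  have h₂ := hb (by lia : j + 2 ≤ N + 1)
  refine ⟨j, hj, hb (by lia), h₁, ?_⟩
  have hratio : (1 - ε) * b (j + 1) ≤ b (j + 2) := by
    rw [← le_div_iff₀ h₁]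
    calc 1 - ε ≤ Real.log (b (j + 2) / b (j + 1)) + 1 := by
          rw [Real.log_div h₂.ne' h₁.ne']
          linarith
      _ ≤ b (j + 2) / b (j + 1) := by linarith [Real.log_le_sub_one_of_pos (div_pos h₂ h₁)]
  calc (1 - ε) * b (j + 1) ^ 2 = b (j + 1) * ((1 - ε) * b (j + 1)) := by ring
    _ ≤ b (j + 1) * b (j + 2) := mul_le_mul_of_nonneg_left hratio h₁.le
    _ ≤ b j * b (j + 2) := mul_le_mul_of_nonneg_right (hanti j.le_succ) h₂.le

end NearlyGeometric

theorem sub_sub_sub_le_of_second_difference_le {L : ℕ → ℝ} {η : ℝ}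
    (hL : ∀ k, 2 * L (k + 1) - L k - L (k + 2) ≤ η) (n k : ℕ) :
    (L (k + n) - L (k + 1 + n)) - (L k - L (k + 1)) ≤ n * η := by
  induction n with
  | zero => simp
  | succ n ih =>
    have hstep := hL (k + n)
    rw [add_right_comm] at ih
    rw [← add_assoc, ← add_assoc, add_right_comm k 1 n, Nat.cast_succ]
    linarith

theorem two_mul_sub_sub_le_of_second_difference_le {L : ℕ → ℝ} {η : ℝ}
    (hL : ∀ k, 2 * L (k + 1) - L k - L (k + 2) ≤ η) (n : ℕ) :
    2 * L n - L 0 - L (2 * n) ≤ n ^ 2 * η := by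
  have hsum := sum_le_sum fun k (_ : k ∈ range n) =>
    sub_sub_sub_le_of_second_difference_le hL n k
  rw [sum_sub_distrib, sum_range_sub' fun k => L (k + n), sum_range_sub' L, sum_const, card_range,
    nsmul_eq_mul, zero_add, ← two_mul] at hsum
  linarith

theorem exists_pow_eq_of_lt_one {q : ℝ} (hq : 0 < q) (hq1 : q < 1) {N : ℕ} (hN : N ≠ 0) :
    ∃ r, 0 < r ∧ r < 1 ∧ r ^ N = q :=
  ⟨q ^ (N : ℝ)⁻¹, by positivity, Real.rpow_lt_one hq.le hq1 (by positivity),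
    Real.rpow_inv_natCast_pow hq.le hN⟩

namespace PreservesPolyaFrequency

variable {F : ℝ → ℝ} {x q r : ℝ}

theorem hasPolyaFrequencyTails (hF : PreservesPolyaFrequency F) (h0 : F 0 = 0) (hx : 0 ≤ x)
    (hr : 0 ≤ r) : HasPolyaFrequencyTails fun n => F (x * r ^ n) := by
  intro k
  have hseq := hF _ ((IsPolyaFrequencySeq.oneSided_pow hr).const_mul
    (mul_nonneg hx (pow_nonneg hr k)))
  convert hseq using 2 with n
  simp only [oneSided]
  split_ifs
  · rw [pow_add, mul_assoc]
  · rw [mul_zero, h0]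

theorem antitone_geometric (hF : PreservesPolyaFrequency F) (hx : 0 ≤ x) (hr : 0 ≤ r)
    (hr1 : r ≤ 1) : Antitone fun n : ℕ => F (x * r ^ n) := fun _ _ hmn =>
  hF.monotoneOn (mul_nonneg hx (pow_nonneg hr _)) (mul_nonneg hx (pow_nonneg hr _))
    (mul_le_mul_of_nonneg_left (pow_le_pow_of_le_one hr hr1 hmn) hx)

/- From `F x` down to `F (x * q ^ 2)` there are at least `N` steps of ratio `r`, so some step
multiplies `F` by at least `1 - ε`. -/
theorem nearlyGeometricAt (hF : PreservesPolyaFrequency F) (h0 : F 0 = 0) (hx : 0 ≤ x)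
    (hr : 0 ≤ r) (hr1 : r ≤ 1) {N : ℕ} (hN : N ≠ 0) (hpos : 0 < F (x * (r ^ N) ^ 2)) {ε : ℝ}
    (hlog : Real.log (F x) - Real.log (F (x * (r ^ N) ^ 2)) ≤ N * ε) (hε0 : 0 ≤ ε)
    (hε : ε ≤ 1 / 4) {k : ℕ} (hk : N + 1 ≤ k) :
    NearlyGeometricAt (fun n => F (x * r ^ n)) (8 * ε ^ 4) k := by
  have hanti := hF.antitone_geometric hx hr hr1
  have hfirst : F (x * r ^ 1) ≤ F x := by simpa using hanti zero_le_one
  have hlast : F (x * (r ^ N) ^ 2) ≤ F (x * r ^ (N + 1)) := by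
    rw [← pow_mul]
    exact hanti (by lia)
  have hpos' := hpos.trans_le hlast
  have hpos₁ : 0 < F (x * r ^ 1) := hpos'.trans_le (hanti (by lia))
  have hdrop := Real.log_le_log hpos₁ hfirst
  have hdrop' := Real.log_le_log hpos hlast
  obtain ⟨j, hj, hgeom⟩ :=
    exists_nearlyGeometricAt (ε := ε) hanti hN hpos' (by linarith)
  exact hgeom.of_add_two_le (hF.hasPolyaFrequencyTails h0 hx hr) hε0 hε (by lia)

theorem pos_of_pos (hF : PreservesPolyaFrequency F) (h0 : F 0 = 0) {z : ℝ} (hz : 0 < z)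
    (hFz : 0 < F z) (hx : 0 < x) : 0 < F x := by
  obtain ⟨N, hNC⟩ := exists_nat_ge (max 1 (4 * (Real.log (F (4 * z)) - Real.log (F z))))
  rw [max_le_iff, Nat.one_le_cast] at hNC
  obtain ⟨hN, hC⟩ := hNC
  obtain ⟨r, hr, hr1, hrN⟩ := exists_pow_eq_of_lt_one one_half_pos one_half_lt_one
    (Nat.one_le_iff_ne_zero.1 hN)
  have hend : 4 * z * (r ^ N) ^ 2 = z := by
    rw [hrN]
    ring
  obtain ⟨k, hk, hkx⟩ : ∃ k, N + 1 ≤ k ∧ 4 * z * r ^ k < x := by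
    have hlim := (tendsto_pow_atTop_nhds_zero_of_lt_one hr.le hr1).const_mul (4 * z)
    rw [mul_zero] at hlim
    exact ((eventually_ge_atTop (N + 1)).and (hlim.eventually_lt_const hx)).exists
  have hgeom := hF.nearlyGeometricAt (ε := 1 / 4) h0 (by positivity : 0 ≤ 4 * z) hr.le hr1.le
    (Nat.one_le_iff_ne_zero.1 hN) (by rwa [hend]) (by rw [hend]; linarith) (by norm_num) le_rfl hk
  exact hgeom.1.trans_le (hF.monotoneOn (by positivity : 0 ≤ 4 * z * r ^ k) hx.le hkx.le)

/- With ratio `r = q ^ (1 / N)` the second differences of `log ∘ F` are eventually `O(N⁻⁴)`;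
`N ^ 2` of them add up to the one with ratio `q`. -/
theorem two_mul_log_sub_sub_le (hF : PreservesPolyaFrequency F) (h0 : F 0 = 0)
    (hpos : ∀ y, 0 < y → 0 < F y) (hx : 0 < x) (hq : 0 < q) (hq1 : q < 1) {N : ℕ} (hN : N ≠ 0)
    (hC : 4 * (Real.log (F x) - Real.log (F (x * q ^ 2))) ≤ N) :
    2 * Real.log (F (x * q ^ 3)) - Real.log (F (x * q ^ 2)) - Real.log (F (x * q ^ 4)) ≤
      16 * (Real.log (F x) - Real.log (F (x * q ^ 2))) ^ 4 / N ^ 2 := by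
  obtain ⟨r, hr, hr1, rfl⟩ := exists_pow_eq_of_lt_one hq hq1 hN
  set C := Real.log (F x) - Real.log (F (x * (r ^ N) ^ 2))
  have hN0 : (0 : ℝ) < N := by positivity
  have hC0 : 0 ≤ C := by
    have hle : F (x * (r ^ N) ^ 2) ≤ F x := by
      simpa using hF.antitone_geometric hx.le hq.le hq1.le (Nat.zero_le 2)
    exact sub_nonneg.2 (Real.log_le_log (hpos _ (by positivity)) hle)
  have hε : C / N ≤ 1 / 4 := by
    rw [div_le_iff₀ hN0]
    linarith
  have hgeom (k : ℕ) : NearlyGeometricAt (fun n => F (x * r ^ n)) (8 * (C / N) ^ 4) (2 * N + k) :=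
    hF.nearlyGeometricAt h0 hx.le hr.le hr1.le hN (hpos _ (by positivity))
      (mul_div_cancel₀ C hN0.ne').ge (by positivity) hε (by lia)
  have hη : 8 * (C / N) ^ 4 ≤ 1 / 2 := by
    have hε4 := pow_le_pow_left₀ (by positivity) hε 4
    linarith
  have hblock := two_mul_sub_sub_le_of_second_difference_le
    (L := fun k => Real.log (F (x * r ^ (2 * N + k))))
    (fun k => (hgeom k).two_mul_log_sub_le (by positivity) hη) N
  convert hblock using 1
  · simp only [← pow_mul]
    ring_nf
  · field_simp
    ring

theorem mul_eq_sq (hF : PreservesPolyaFrequency F) (h0 : F 0 = 0)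
    (hpos : ∀ y, 0 < y → 0 < F y) (hx : 0 < x) (hq : 0 < q) (hq1 : q < 1) :
    F x * F (x * q ^ 2) = F (x * q) ^ 2 := by
  have hlogconcave : F x * F (x * q ^ 2) ≤ F (x * q) ^ 2 := by
    simpa using (hF.hasPolyaFrequencyTails h0 hx.le hq.le).mul_le_sq 0
  refine hlogconcave.antisymm ?_
  obtain ⟨y, hy, rfl⟩ : ∃ y, 0 < y ∧ y * q ^ 2 = x :=
    ⟨x / q ^ 2, by positivity, div_mul_cancel₀ _ (by positivity)⟩
  set C := Real.log (F y) - Real.log (F (y * q ^ 2))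
  have hbound : ∀ᶠ N : ℕ in atTop, 2 * Real.log (F (y * q ^ 3)) - Real.log (F (y * q ^ 2)) -
      Real.log (F (y * q ^ 4)) ≤ 16 * C ^ 4 / (N : ℝ) ^ 2 := by
    filter_upwards [eventually_ne_atTop 0, eventually_ge_atTop ⌈4 * C⌉₊] with N hN hCN
    exact hF.two_mul_log_sub_sub_le h0 hpos hy hq hq1 hN (Nat.ceil_le.1 hCN)
  have hlog := ge_of_tendsto (tendsto_const_nhds.div_atTop
    ((tendsto_pow_atTop two_ne_zero).comp tendsto_natCast_atTop_atTop)) hbound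
  rw [mul_assoc, mul_assoc, ← pow_succ, ← pow_add]
  have h₂ := hpos _ hx
  have h₃ := hpos (y * q ^ 3) (by positivity)
  have h₄ := hpos (y * q ^ 4) (by positivity)
  rw [← Real.log_le_log_iff (by positivity) (by positivity), Real.log_pow,
    Real.log_mul h₂.ne' h₄.ne']
  push_cast
  linarith

end PreservesPolyaFrequency

section PowerLaw

theorem exists_eq_mul_rpow_of_monotoneOn {f : ℝ → ℝ} (hmono : MonotoneOn f (Set.Ioi 0))
    (hpos : ∀ x, 0 < x → 0 < f x)
    (hmul : ∀ x y, 0 < x → 0 < y → f x * f y = f 1 * f (x * y)) :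
    ∃ α : ℝ, ∀ x, 0 < x → f x = f 1 * x ^ α := by
  have h1 := hpos 1 one_pos
  let g : ℝ →+ ℝ := AddMonoidHom.mk' (fun u => Real.log (f (Real.exp u)) - Real.log (f 1)) (by
    intro u v
    have hu := hpos _ (Real.exp_pos u)
    have hv := hpos _ (Real.exp_pos v)
    have huv := hpos _ (Real.exp_pos (u + v))
    have hlog := congrArg Real.log (hmul _ _ (Real.exp_pos u) (Real.exp_pos v))
    rw [← Real.exp_add, Real.log_mul hu.ne' hv.ne', Real.log_mul h1.ne' huv.ne'] at hlog
    linarith)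
  have hg : Monotone g := fun u v huv => sub_le_sub_right (Real.log_le_log (hpos _ (Real.exp_pos u))
    (hmono (Real.exp_pos u) (Real.exp_pos v) (Real.exp_le_exp.2 huv))) _
  have hcont : Continuous g :=
    MeasureTheory.Measure.AddMonoidHom.continuous_of_measurable g hg.measurable
  refine ⟨g 1, fun x hx => ?_⟩
  have hlinear : g (Real.log x) = Real.log x * g 1 := by
    simpa using map_real_smul g hcont (Real.log x) 1
  have hratio : g (Real.log x) = Real.log (f x / f 1) := by
    rw [Real.log_div (hpos x hx).ne' h1.ne']
    exact congrArg (fun t => Real.log (f t) - Real.log (f 1)) (Real.exp_log hx)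
  rw [Real.rpow_def_of_pos hx, ← hlinear, hratio, Real.exp_log (div_pos (hpos x hx) h1),
    mul_div_cancel₀ _ h1.ne']

namespace PreservesPolyaFrequency

variable {F : ℝ → ℝ} {α c : ℝ}

theorem mul_eq_mul (hF : PreservesPolyaFrequency F) (h0 : F 0 = 0)
    (hpos : ∀ x, 0 < x → 0 < F x) {x y : ℝ} (hx : 0 < x) (hy : 0 < y) :
    F x * F y = F 1 * F (x * y) := by
  have hsquares {u v : ℝ} (hu : 0 < u) (hv : 0 < v) : F (u ^ 2) * F (v ^ 2) = F (u * v) ^ 2 := by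
    rcases lt_trichotomy v u with hvu | rfl | huv
    · convert hF.mul_eq_sq h0 hpos (pow_pos hu 2) (div_pos hv hu) ((div_lt_one hu).2 hvu) using 3
        <;> field_simp
    · rw [← sq, sq v]
    · rw [mul_comm]
      convert hF.mul_eq_sq h0 hpos (pow_pos hv 2) (div_pos hu hv) ((div_lt_one hv).2 huv) using 3
        <;> field_simp
  have hprod := hsquares (Real.sqrt_pos.2 hx) (Real.sqrt_pos.2 hy)
  have hone := hsquares one_pos (mul_pos (Real.sqrt_pos.2 hx) (Real.sqrt_pos.2 hy))
  rw [one_mul, ← hprod, one_pow, mul_pow, Real.sq_sqrt hx.le, Real.sq_sqrt hy.le] at hone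
  exact hone.symm

theorem exists_eq_mul_rpow (hF : PreservesPolyaFrequency F)
    (hne : ∃ x y, 0 ≤ x ∧ 0 ≤ y ∧ F x ≠ F y) :
    ∃ c α : ℝ, 0 < c ∧ ∀ x, 0 < x → F x = c * x ^ α := by
  have h0 := hF.map_zero hne
  obtain ⟨z, hz, hFz⟩ : ∃ z, 0 < z ∧ 0 < F z := by
    by_contra! hle
    have hzero {x : ℝ} (hx : 0 ≤ x) : F x = 0 := by
      rcases hx.eq_or_lt with rfl | hx
      · exact h0
      · exact (hle x hx).antisymm (hF.nonneg hx.le)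
    obtain ⟨x, y, hx, hy, hxy⟩ := hne
    exact hxy ((hzero hx).trans (hzero hy).symm)
  have hpos (x : ℝ) (hx : 0 < x) : 0 < F x := hF.pos_of_pos h0 hz hFz hx
  obtain ⟨α, hα⟩ := exists_eq_mul_rpow_of_monotoneOn (hF.monotoneOn.mono Set.Ioi_subset_Ici_self)
    hpos fun x y hx hy => hF.mul_eq_mul h0 hpos hx hy
  exact ⟨F 1, α, hpos 1 one_pos, hα⟩

theorem two_mul_sq_le (hF : PreservesPolyaFrequency F) (h0 : F 0 = 0) (h2 : 0 < F 2) :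
    2 * F 1 ^ 2 ≤ F 2 ^ 2 := by
  have hbinom := (IsPolyaFrequencySeq.ite_eq_zero.add_mul_shift zero_le_one).add_mul_shift
    zero_le_one
  have hminor := (hF _ hbinom).two_mul_le_of_neg_one_eq_zero (by simp [h0])
  norm_num [h0] at hminor
  exact le_of_mul_le_mul_right (by linarith) h2

theorem one_half_le_of_eq_mul_rpow (hF : PreservesPolyaFrequency F) (h0 : F 0 = 0) (hc : 0 < c)
    (hpow : ∀ x, 0 < x → F x = c * x ^ α) : 1 / 2 ≤ α := by
  have h1 : F 1 = c := by simp [hpow 1 one_pos]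
  have h2 : F 2 = c * 2 ^ α := hpow 2 two_pos
  have hsq := hF.two_mul_sq_le h0 (by rw [h2]; positivity)
  rw [h1, h2, mul_pow, mul_comm] at hsq
  have hexp : (2 : ℝ) ^ (1 : ℝ) ≤ 2 ^ (α * 2) := by
    rw [Real.rpow_one, Real.rpow_mul two_pos.le, Real.rpow_two]
    exact le_of_mul_le_mul_left hsq (pow_pos hc 2)
  linarith [(Real.rpow_le_rpow_left_iff one_lt_two).1 hexp]

theorem rpow_of_eq_mul_rpow (hF : PreservesPolyaFrequency F) (h0 : F 0 = 0) (hc : 0 < c)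
    (hα : α ≠ 0) (hpow : ∀ x, 0 < x → F x = c * x ^ α) :
    PreservesPolyaFrequency fun x => x ^ α := by
  intro a ha
  convert (hF a ha).const_mul (inv_nonneg.2 hc.le) using 2 with n
  rcases (ha.nonneg n).eq_or_lt with hn | hn
  · rw [← hn, h0, mul_zero]
    exact Real.zero_rpow hα
  · rw [hpow _ hn, inv_mul_cancel_left₀ hc.ne']

theorem rpow_pow (hF : PreservesPolyaFrequency fun x => x ^ α) (k : ℕ) :
    PreservesPolyaFrequency fun x => x ^ α ^ k := by
  induction k with
  | zero => simp [PreservesPolyaFrequency]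
  | succ k ih =>
    intro a ha
    simpa only [pow_succ, Real.rpow_mul (ha.nonneg _)] using hF _ (ih a ha)

theorem one_le_of_rpow (hF : PreservesPolyaFrequency fun x => x ^ α) (hα : 0 < α) : 1 ≤ α := by
  by_contra! hα1
  obtain ⟨k, hk⟩ := exists_pow_lt_of_lt_one one_half_pos hα1
  have hαk := (hF.rpow_pow k).one_half_le_of_eq_mul_rpow (α := α ^ k)
    (Real.zero_rpow (pow_pos hα k).ne') one_pos fun x _ => (one_mul _).symm
  linarith

end PreservesPolyaFrequency

end PowerLaw

section HalfTheta

open Asymptotics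

theorem log_one_sub_add_isLittleO :
    (fun x : ℝ => Real.log (1 - x) + x + x ^ 2 / 2) =o[𝓝 0] fun x => x ^ 2 := by
  refine IsBigO.trans_isLittleO (g := fun x : ℝ => x ^ 3) (.of_bound 2 ?_)
    (isLittleO_pow_pow (by norm_num))
  filter_upwards [Metric.closedBall_mem_nhds (0 : ℝ) one_half_pos] with x hx
  rw [mem_closedBall_zero_iff, Real.norm_eq_abs] at hx
  have hbound := Real.abs_log_sub_add_sum_range_le (by linarith : |x| < 1) 2
  calc ‖Real.log (1 - x) + x + x ^ 2 / 2‖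
      = |∑ i ∈ range 2, x ^ (i + 1) / (i + 1) + Real.log (1 - x)| := by
        rw [Real.norm_eq_abs, sum_range_succ, sum_range_one]
        congr 1
        push_cast
        ring
    _ ≤ |x| ^ 3 / (1 - |x|) := hbound
    _ ≤ |x| ^ 3 / (1 / 2) := by gcongr; linarith
    _ = 2 * ‖x ^ 3‖ := by
        rw [Real.norm_eq_abs, abs_pow]
        ring

theorem tendsto_log_one_sub_pow_mul_one_add (n : ℕ) :
    Tendsto (fun δ : ℝ => Real.log ((1 - δ) ^ n * (1 + n * δ)) / δ ^ 2) (𝓝[>] 0)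
      (𝓝 (-(n + 1).choose 2)) := by
  have hscaled : (fun δ : ℝ => Real.log (1 - -(n * δ)) + -(n * δ) + (-(n * δ)) ^ 2 / 2)
      =o[𝓝 0] fun δ => δ ^ 2 := by
    refine (log_one_sub_add_isLittleO.comp_tendsto (k := fun δ : ℝ => -(n * δ)) ?_).trans_isBigO ?_
    · exact Continuous.tendsto' (by fun_prop) 0 0 (by simp)
    · refine .of_bound ((n : ℝ) ^ 2) (.of_forall fun δ => ?_)
      simp [mul_pow]
  have hsum := (((log_one_sub_add_isLittleO.const_mul_left (n : ℝ)).add hscaled).mono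
    (nhdsWithin_le_nhds (s := Set.Ioi 0))).tendsto_div_nhds_zero.sub_const ((n + 1).choose 2 : ℝ)
  rw [zero_sub] at hsum
  refine hsum.congr' ?_
  filter_upwards [Ioo_mem_nhdsGT one_pos] with δ hδ
  obtain ⟨hδ0, hδ1⟩ := hδ
  rw [Real.log_mul (pow_pos (sub_pos.2 hδ1) n).ne' (by positivity), Real.log_pow, sub_neg_eq_add,
    Nat.cast_choose_two]
  push_cast
  field_simp
  ring

theorem tendsto_one_sub_pow_mul_one_add_rpow {y : ℝ} (hy : 0 < y) (n : ℕ) :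
    Tendsto (fun δ : ℝ => ((1 - δ) ^ n * (1 + n * δ)) ^ (-Real.log y / δ ^ 2)) (𝓝[>] 0)
      (𝓝 (y ^ (n + 1).choose 2)) := by
  have hexp := (Real.continuous_exp.tendsto _).comp
    ((tendsto_log_one_sub_pow_mul_one_add n).mul_const (-Real.log y))
  have hval : Real.exp (-((n + 1).choose 2 : ℝ) * -Real.log y) = y ^ (n + 1).choose 2 := by
    rw [neg_mul_neg, ← Real.log_pow, Real.exp_log (pow_pos hy _)]
  rw [hval] at hexp
  refine hexp.congr' ?_
  filter_upwards [Ioo_mem_nhdsGT one_pos] with δ hδ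
  obtain ⟨hδ0, hδ1⟩ := hδ
  rw [Real.rpow_def_of_pos (mul_pos (pow_pos (sub_pos.2 hδ1) n) (by positivity))]
  simp only [Function.comp_apply]
  ring_nf

theorem PreservesPolyaFrequency.isPolyaFrequencySeq_halfTheta {α y : ℝ}
    (hF : PreservesPolyaFrequency fun x => x ^ α) (hα : 1 < α) (hy : 0 < y) (hy1 : y < 1) :
    IsPolyaFrequencySeq fun n => y ^ (n.toNat + 1).choose 2 := by
  have hlog : 0 < -Real.log y := neg_pos.2 (Real.log_neg hy hy1)
  have hδ : Tendsto (fun k : ℕ => √(-Real.log y / α ^ k)) atTop (𝓝[>] 0) := by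
    refine tendsto_nhdsWithin_iff.2 ⟨?_, .of_forall fun k => Real.sqrt_pos.2 (by positivity)⟩
    simpa using ((tendsto_pow_atTop_atTop_of_one_lt hα).const_div_atTop (-Real.log y)).sqrt
  have hexponent (k : ℕ) : -Real.log y / √(-Real.log y / α ^ k) ^ 2 = α ^ k := by
    rw [Real.sq_sqrt (by positivity), div_div_cancel₀ hlog.ne']
  refine IsTNKernel.of_tendsto ?_ fun i j =>
    (tendsto_one_sub_pow_mul_one_add_rpow hy (i - j).toNat).comp hδ
  filter_upwards [hδ.eventually (Ioo_mem_nhdsGT one_pos)] with k hk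
  simp only [Function.comp_apply, hexponent]
  exact hF.rpow_pow k _ (IsPolyaFrequencySeq.one_sub_pow_mul_one_add hk.1 hk.2.le)

theorem det_fin_four_toeplitz_one (a b c d : ℝ) :
    !![a, 1, 1, 1; b, a, 1, 1; c, b, a, 1; d, c, b, a].det =
      a ^ 4 - 3 * a ^ 2 * b - 2 * a ^ 2 * c - a ^ 2 * d + 2 * a * b ^ 2 + 2 * a * b * c +
        2 * a * c + 2 * a * d - b ^ 3 + b ^ 2 - 2 * b * c - d := by
  have h₁ : Fin.succAbove (1 : Fin 4) 2 = 3 := rfl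
  have h₂ : Fin.succAbove (2 : Fin 4) 2 = 3 := rfl
  have h₃ : Fin.succAbove (3 : Fin 4) 2 = 2 := rfl
  simp [Matrix.det_succ_row_zero, Fin.sum_univ_succ, h₁, h₂, h₃]
  ring

theorem not_isPolyaFrequencySeq_halfTheta :
    ¬ IsPolyaFrequencySeq fun n => (9 / 10 : ℝ) ^ (n.toNat + 1).choose 2 := by
  intro h
  have hminor := h.toeplitz_minor_nonneg 4 1
  have hmatrix : (Matrix.of fun i j : Fin 4 =>
      (9 / 10 : ℝ) ^ ((1 + (i : ℕ) - (j : ℕ) : ℤ).toNat + 1).choose 2) =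
        !![9 / 10, 1, 1, 1;
          (9 / 10) ^ 3, 9 / 10, 1, 1;
          (9 / 10) ^ 6, (9 / 10) ^ 3, 9 / 10, 1;
          (9 / 10) ^ 10, (9 / 10) ^ 6, (9 / 10) ^ 3, 9 / 10] := by
    ext i j
    fin_cases i <;> fin_cases j <;> simp [Nat.choose_two_right]
  rw [hmatrix, det_fin_four_toeplitz_one] at hminor
  norm_num at hminor

theorem PreservesPolyaFrequency.le_one_of_rpow {α : ℝ}
    (hF : PreservesPolyaFrequency fun x => x ^ α) : α ≤ 1 := by
  by_contra! hα
  exact not_isPolyaFrequencySeq_halfTheta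
    (hF.isPolyaFrequencySeq_halfTheta hα (by norm_num) (by norm_num))

end HalfTheta

theorem PreservesPolyaFrequency.exists_eq_const_mul {F : ℝ → ℝ} (hF : PreservesPolyaFrequency F)
    (hne : ∃ x y, 0 ≤ x ∧ 0 ≤ y ∧ F x ≠ F y) : ∃ c, 0 < c ∧ ∀ x, 0 ≤ x → F x = c * x := by
  have h0 := hF.map_zero hne
  obtain ⟨c, α, hc, hpow⟩ := hF.exists_eq_mul_rpow hne
  have hα : 0 < α := one_half_pos.trans_le (hF.one_half_le_of_eq_mul_rpow h0 hc hpow)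
  have hrpow := hF.rpow_of_eq_mul_rpow h0 hc hα.ne' hpow
  have hα1 : α = 1 := hrpow.le_one_of_rpow.antisymm (hrpow.one_le_of_rpow hα)
  refine ⟨c, hc, fun x hx => ?_⟩
  rcases hx.eq_or_lt with rfl | hx
  · rw [h0, mul_zero]
  · rw [hpow x hx, hα1, Real.rpow_one]

theorem stmt_16 (F : ℝ → ℝ) (hF0 : ∀ x : ℝ, 0 ≤ x → 0 ≤ F x)
    (hFnonconst : ∃ x y : ℝ, 0 ≤ x ∧ 0 ≤ y ∧ F x ≠ F y) :
    (∀ a : ℤ → ℝ, IsPolyaFrequencySeq a → IsPolyaFrequencySeq fun n => F (a n)) ↔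
      ∃ c : ℝ, 0 < c ∧ ∀ x : ℝ, 0 ≤ x → F x = c * x := by
  refine ⟨fun hF => PreservesPolyaFrequency.exists_eq_const_mul hF hFnonconst, ?_⟩
  rintro ⟨c, hc, hF⟩ a ha
  simpa only [hF _ (ha.nonneg _)] using ha.const_mul hc.le
end

section
/- Let X, Y ⊆ ℝ be a pair of admissible sets and let F : (0,∞) → (0,∞). Then F∘K is a totally positive Toeplitz kernel on X × Y for every totally positive Toeplitz kernel K on X × Y if and only if F(x) = c·x for some c > 0. -/
/-- A kernel on linearly ordered sets is totally positive if all matrices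
obtained by evaluating it on increasing tuples have positive determinant. -/
def IsTPKernel {X Y : Type*} [LinearOrder X] [LinearOrder Y] (K : X → Y → ℝ) : Prop :=
  ∀ (n : ℕ) (x : Fin n → X) (y : Fin n → Y), StrictMono x → StrictMono y →
    0 < (Matrix.of fun i j : Fin n => K (x i) (y j)).det

/-- A pair of subsets of `ℝ` is admissible if, for each `n ≥ 2`, both contain
`n`-term arithmetic progressions with the same (positive) common difference. -/
def AdmissiblePair (X Y : Set ℝ) : Prop :=
  ∀ n : ℕ, 2 ≤ n → ∃ x y h : ℝ, 0 < h ∧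
    (∀ i : ℕ, i < n → x + i * h ∈ X) ∧ (∀ i : ℕ, i < n → y + i * h ∈ Y)

/-!
If `φ (u / v)` is a totally positive kernel on `(0, ∞)²`, then `φ (exp (θ (x - y)))` is a totally
positive Toeplitz kernel for every `θ > 0`, and admissibility makes its minors along arbitrarily
long arithmetic progressions available. The `2 × 2` minors force `log ∘ F ∘ exp` to be strictly
increasing and concave. Hence `F` is continuous, lies below `F A * (1 - δ) ^ α` at `A * (1 - δ)`,
and has there a one-sided derivative `-F A * α` in `δ` at `0`.

The kernels `r ^ N / (1 + r ^ N)` are of Cauchy type, hence totally positive, and tend to the step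
function at `1`. Multiplication by powers of `r` and integration from `0` preserve total positivity
and yield in the limit, up to powers of `r = u / v = 1 / x`, the functions `A * (1 - x ^ 2)` and
`A * (1 - 3 * x ^ 2 + 2 * x ^ 3)` on `(0, 1)`. So the minors of `F (A * (1 - x ^ 2))` of order `3`
and of `F (A * (1 - 3 * x ^ 2 + 2 * x ^ 3))` of order `4`, as kernels in `x = p * z`, have constant
sign. When all but the last `p` and the last `z` tend to `0`, these minors degenerate to the
remainders of the Taylor expansions at `x = 0`: order `3` puts `F (A * (1 - δ))` above its tangent
`F A * (1 - α * δ)`, and order `4` puts it below. Positivity of `F` and the bound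
`F A * (1 - δ) ^ α` leave only `α = 1`.
-/

open Filter Topology Set Function

namespace IsTPKernel

variable {X Y X' Y' : Type*} [LinearOrder X] [LinearOrder Y] [LinearOrder X'] [LinearOrder Y']
  {K : X → Y → ℝ}

theorem pos (h : IsTPKernel K) (a : X) (b : Y) : 0 < K a b := by
  simpa using h 1 (fun _ => a) (fun _ => b) (Subsingleton.strictMono _) (Subsingleton.strictMono _)

theorem comp_strictMono (h : IsTPKernel K) {f : X' → X} {g : Y' → Y} (hf : StrictMono f)
    (hg : StrictMono g) : IsTPKernel fun a b => K (f a) (g b) :=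
  fun n _ _ hx hy => h n _ _ (hf.comp hx) (hg.comp hy)

theorem mul_left_right (h : IsTPKernel K) {p : X → ℝ} {q : Y → ℝ} (hp : ∀ a, 0 < p a)
    (hq : ∀ b, 0 < q b) : IsTPKernel fun a b => p a * (q b * K a b) := by
  intro n x y hx hy
  have hdet : (Matrix.of fun i j : Fin n => p (x i) * (q (y j) * K (x i) (y j))).det =
      (∏ i, p (x i)) * ((∏ j, q (y j)) * (Matrix.of fun i j => K (x i) (y j)).det) := by
    rw [← Matrix.det_mul_row, ← Matrix.det_mul_column]
    rfl
  rw [hdet]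
  exact mul_pos (Finset.prod_pos fun i _ => hp _)
    (mul_pos (Finset.prod_pos fun j _ => hq _) (h n x y hx hy))

end IsTPKernel

theorem det_cauchy_succ {𝕜 : Type*} [Field 𝕜] {n : ℕ} {a b : Fin (n + 1) → 𝕜}
    (hab : ∀ i j, a i + b j ≠ 0) :
    (Matrix.of fun i j => (a i + b j)⁻¹).det =
      (a 0 + b 0)⁻¹ * ((∏ i : Fin n, (a i.succ - a 0) / (a i.succ + b 0)) *
        ((∏ j : Fin n, (b j.succ - b 0) / (a 0 + b j.succ)) *
          (Matrix.of fun i j : Fin n => (a i.succ + b j.succ)⁻¹).det)) := by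
  let B : Matrix (Fin (n + 1)) (Fin (n + 1)) 𝕜 := Matrix.of <| Fin.cons
    (fun j => (a 0 + b j)⁻¹)
    (fun i j => (a i.succ - a 0) / (a i.succ + b 0) *
      ((b j - b 0) / (a 0 + b j) * (a i.succ + b j)⁻¹))
  have row_reduce : (Matrix.of fun i j => (a i + b j)⁻¹).det = B.det := by
    refine Matrix.det_eq_of_forall_row_eq_smul_add_const
      (Fin.cons 0 fun i => (a 0 + b 0) / (a i.succ + b 0)) 0 rfl fun i j => ?_
    cases i using Fin.cases with
    | zero => simp [B]
    | succ i =>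
      have h₁ := hab i.succ 0
      have h₂ := hab 0 j
      have h₃ := hab i.succ j
      simp only [B, Matrix.of_apply, Fin.cons_succ, Fin.cons_zero]
      field_simp
      ring
  rw [row_reduce, Matrix.det_succ_column_zero, Fin.sum_univ_succ, Finset.sum_eq_zero, add_zero,
    ← Matrix.det_mul_row, ← Matrix.det_mul_column]
  · simp only [Fin.val_zero, pow_zero, one_mul]
    rfl
  · simp [B]

theorem det_cauchy_pos : ∀ {n : ℕ} {a b : Fin n → ℝ}, (∀ i j, 0 < a i + b j) → StrictMono a →
    StrictMono b → 0 < (Matrix.of fun i j => (a i + b j)⁻¹).det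
  | 0, _, _, _, _, _ => by simp
  | n + 1, a, b, hab, ha, hb => by
    have ih : 0 < (Matrix.of fun i j : Fin n => (a i.succ + b j.succ)⁻¹).det :=
      det_cauchy_pos (fun i j => hab _ _) (ha.comp Fin.strictMono_succ)
        (hb.comp Fin.strictMono_succ)
    rw [det_cauchy_succ fun i j => (hab i j).ne']
    exact mul_pos (inv_pos.2 (hab 0 0)) <| mul_pos
      (Finset.prod_pos fun i _ => div_pos (sub_pos.2 (ha i.succ_pos)) (hab _ _)) <| mul_pos
      (Finset.prod_pos fun j _ => div_pos (sub_pos.2 (hb j.succ_pos)) (hab _ _)) ih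

theorem exists_map_sub_eq_prod_mul_map_deriv {ι : Type*} [Fintype ι] {E : ι → Type*}
    [∀ i, NormedAddCommGroup (E i)] [∀ i, NormedSpace ℝ (E i)]
    (f : ContinuousMultilinearMap ℝ E ℝ) {γ γ' : ∀ i, ℝ → E i} {a b : ι → ℝ}
    (hab : ∀ i, a i < b i) (hγ : ∀ i, ∀ t ∈ Icc (a i) (b i), HasDerivAt (γ i) (γ' i t) t) :
    ∃ ξ : ι → ℝ, (∀ i, ξ i ∈ Ioo (a i) (b i)) ∧
      f (fun i => γ i (b i) - γ i (a i)) = (∏ i, (b i - a i)) * f fun i => γ' i (ξ i) := by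
  classical
  suffices H : ∀ S : Finset ι, ∃ m : ∀ i, E i,
      (∀ i ∈ S, ∃ ξ ∈ Ioo (a i) (b i), m i = γ' i ξ) ∧
      (∀ i ∉ S, m i = γ i (b i) - γ i (a i)) ∧
      f (fun i => γ i (b i) - γ i (a i)) = (∏ i ∈ S, (b i - a i)) * f m by
    obtain ⟨m, hm, -, hf⟩ := H Finset.univ
    choose ξ hξ hmξ using fun i => hm i (Finset.mem_univ i)
    exact ⟨ξ, hξ, by rw [hf, funext hmξ]⟩
  intro S
  induction S using Finset.induction_on with
  | empty => exact ⟨_, by simp, fun _ _ => rfl, by simp⟩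
  | insert k S hk ih =>
    obtain ⟨m, hmS, hmS', hf⟩ := ih
    have hderiv : ∀ t ∈ Icc (a k) (b k), HasDerivAt (fun t => f (update m k (γ k t)))
        (f (update m k (γ' k t))) t := fun t ht =>
      (f.toContinuousLinearMap m k).hasFDerivAt.comp_hasDerivAt t (hγ k t ht)
    obtain ⟨t, ht, hslope⟩ := exists_hasDerivAt_eq_slope _ _ (hab k)
      (fun t ht => (hderiv t ht).continuousAt.continuousWithinAt)
      fun t ht => hderiv t (Ioo_subset_Icc_self ht)
    refine ⟨update m k (γ' k t), fun i hi => ?_, fun i hi => ?_, ?_⟩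
    · obtain rfl | hik := eq_or_ne i k
      · exact ⟨t, ht, update_self ..⟩
      · simpa [hik] using hmS i (Finset.mem_of_mem_insert_of_ne hi hik)
    · rw [Finset.mem_insert, not_or] at hi
      rw [update_of_ne hi.1, hmS' i hi.2]
    · rw [eq_div_iff (sub_pos.2 (hab k)).ne', ← f.map_update_sub, ← hmS' k hk, update_eq_self]
        at hslope
      rw [hf, Finset.prod_insert hk, ← hslope]
      ring

/-- `φ` is a totally positive function on the multiplicative group `(0, ∞)`: the kernel
`(u, v) ↦ φ (u / v)` is totally positive. Logarithms turn these into Toeplitz kernels. -/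
def IsTPRatio (φ : ℝ → ℝ) : Prop :=
  IsTPKernel fun u v : Ioi (0 : ℝ) => φ ((u : ℝ) / v)

namespace IsTPRatio

variable {φ : ℝ → ℝ}

theorem det_pos (h : IsTPRatio φ) {n : ℕ} {u v : Fin n → ℝ} (hu : ∀ i, 0 < u i)
    (hv : ∀ j, 0 < v j) (hu_mono : StrictMono u) (hv_mono : StrictMono v) :
    0 < (Matrix.of fun i j => φ (u i / v j)).det :=
  h n (fun i => ⟨u i, hu i⟩) (fun j => ⟨v j, hv j⟩) hu_mono hv_mono

theorem pos (h : IsTPRatio φ) {r : ℝ} (hr : 0 < r) : 0 < φ r := by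
  simpa using IsTPKernel.pos h ⟨r, hr⟩ ⟨1, mem_Ioi.2 one_pos⟩

theorem const_mul (h : IsTPRatio φ) {c : ℝ} (hc : 0 < c) : IsTPRatio fun r => c * φ r := by
  simpa [IsTPRatio] using
    IsTPKernel.mul_left_right h (p := fun _ => c) (q := fun _ => 1) (fun _ => hc) fun _ => one_pos

theorem rpow_mul (h : IsTPRatio φ) (β : ℝ) : IsTPRatio fun r => r ^ β * φ r := by
  unfold IsTPRatio
  convert IsTPKernel.mul_left_right h (p := fun u => (u : ℝ) ^ β) (q := fun v => ((v : ℝ) ^ β)⁻¹)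
    (fun u => Real.rpow_pos_of_pos u.2 β) (fun v => inv_pos.2 (Real.rpow_pos_of_pos v.2 β))
    using 3 with u v
  simp only [Real.div_rpow (mem_Ioi.1 u.2).le (mem_Ioi.1 v.2).le]
  ring

theorem pow_div_one_add_pow {N : ℕ} (hN : N ≠ 0) : IsTPRatio fun r => r ^ N / (1 + r ^ N) := by
  have pow_pos_coe (u : Ioi (0 : ℝ)) : 0 < (u : ℝ) ^ N := pow_pos (mem_Ioi.1 u.2) N
  have pow_strictMono : StrictMono fun u : Ioi (0 : ℝ) => (u : ℝ) ^ N :=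
    fun u _ huv => pow_lt_pow_left₀ (Subtype.coe_lt_coe.2 huv) (mem_Ioi.1 u.2).le hN
  have cauchy : IsTPKernel fun u v : Ioi (0 : ℝ) => ((u : ℝ) ^ N + (v : ℝ) ^ N)⁻¹ :=
    fun n x y hx hy => det_cauchy_pos (fun i j => add_pos (pow_pos_coe _) (pow_pos_coe _))
      (pow_strictMono.comp hx) (pow_strictMono.comp hy)
  unfold IsTPRatio
  convert cauchy.mul_left_right pow_pos_coe (q := fun _ => 1) (fun _ => one_pos) using 3 with u v
  have hu : (0 : ℝ) < u := u.2
  have hv : (0 : ℝ) < v := v.2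
  simp only [div_pow]
  field_simp
  ring

-- Row operations replace row `i` by the integral over `[u (i - 1), u i]` (with `u (-1) = 0`); by
-- the mean value theorem in each row the determinant is then a positive multiple of
-- `det φ (ξ i / v j)` for some `u (i - 1) < ξ i < u i`.
theorem integral (h : IsTPRatio φ) (hφ : Continuous φ) :
    IsTPRatio fun r => ∫ s in (0 : ℝ)..r, φ s := by
  rintro (_ | n) x y hx hy
  · simp
  let v : Fin (n + 1) → ℝ := fun j => y j
  let u : Fin (n + 1) → ℝ := fun i => x i
  let w : Fin (n + 1) → ℝ := Fin.cons 0 fun i => u i.castSucc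
  have hw_nonneg : ∀ i, 0 ≤ w i := Fin.cases le_rfl fun i => (x i.castSucc).2.le
  have hwu : ∀ i, w i < u i := Fin.cases (x 0).2 fun i => hx i.castSucc_lt_succ
  have hle : ∀ i j, i < j → u i ≤ w j := fun i =>
    Fin.cases (fun hi => absurd hi (Fin.not_lt_zero i)) fun j hij =>
      hx.monotone (Fin.le_castSucc_iff.2 hij)
  let γ : ℝ → Fin (n + 1) → ℝ := fun s j => ∫ t in (0 : ℝ)..(s / v j), φ t
  have hγ : ∀ s, HasDerivAt γ (fun j => (v j)⁻¹ * φ (s / v j)) s := fun s =>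
    hasDerivAt_pi.2 fun j => by
      simpa [mul_comm, Function.comp_def] using
        (hφ.integral_hasStrictDerivAt 0 (s / v j)).hasDerivAt.comp s
          ((hasDerivAt_id s).div_const (v j))
  let detL : ContinuousMultilinearMap ℝ (fun _ : Fin (n + 1) => Fin (n + 1) → ℝ) ℝ :=
    { Matrix.detRowAlternating.toMultilinearMap with cont := continuous_id.matrix_det }
  obtain ⟨ξ, hξ, hdet⟩ :=
    exists_map_sub_eq_prod_mul_map_deriv detL (γ := fun _ => γ) hwu fun _ t _ => hγ t
  have row_diff : (Matrix.of fun i => γ (u i)).det = detL fun i => γ (u i) - γ (w i) :=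
    Matrix.det_eq_of_forall_row_eq_smul_add_pred (fun _ => 1) (fun j => by simp [γ, w])
      fun i j => by simp [γ, w]
  have col_scale : (detL fun i j => (v j)⁻¹ * φ (ξ i / v j)) =
      (∏ j, (v j)⁻¹) * (Matrix.of fun i j => φ (ξ i / v j)).det :=
    Matrix.det_mul_row (fun j => (v j)⁻¹) (Matrix.of fun i j => φ (ξ i / v j))
  change 0 < (Matrix.of fun i => γ (u i)).det
  rw [row_diff, hdet, col_scale]
  exact mul_pos (Finset.prod_pos fun i _ => sub_pos.2 (hwu i)) <|
    mul_pos (Finset.prod_pos fun j _ => inv_pos.2 (y j).2) <|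
      h.det_pos (fun i => (hw_nonneg i).trans_lt (hξ i).1) (fun j => (y j).2)
        (fun i j hij => (hξ i).2.trans_le ((hle i j hij).trans (hξ j).1.le)) hy

end IsTPRatio

/-- `f` is, on `(0, ∞) \ {1}`, a pointwise limit of continuous functions `φ N` satisfying
`IsTPRatio` and bounded uniformly in `N` on each `[0, R]`. The limit may vanish and jump at `1`. -/
def IsTPRatioLimit (f : ℝ → ℝ) : Prop :=
  ∃ φ : ℕ → ℝ → ℝ, (∀ N, Continuous (φ N) ∧ IsTPRatio (φ N)) ∧
    (∀ R, ∃ C, ∀ N, ∀ r ∈ Icc 0 R, ‖φ N r‖ ≤ C) ∧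
    ∀ r, 0 < r → r ≠ 1 → Tendsto (fun N => φ N r) atTop (𝓝 (f r))

theorem intervalIntegral_indicator_Ioi {E : Type*} [NormedAddCommGroup E] [NormedSpace ℝ E]
    (f : ℝ → E) {a c r : ℝ} (hac : a ≤ c) (har : a ≤ r) :
    ∫ s in a..r, (Ioi c).indicator f s = (Ioi c).indicator (fun r => ∫ s in c..r, f s) r := by
  rw [intervalIntegral.integral_of_le har, MeasureTheory.setIntegral_indicator measurableSet_Ioi,
    Ioc_inter_Ioi, sup_of_le_right hac]
  rcases le_or_gt r c with hr | hr
  · rw [indicator_of_notMem (notMem_Ioi.2 hr), Ioc_eq_empty hr.not_gt,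
      MeasureTheory.setIntegral_empty]
  · rw [indicator_of_mem (mem_Ioi.2 hr), intervalIntegral.integral_of_le hr.le]

namespace IsTPRatioLimit

variable {f g : ℝ → ℝ}

theorem congr (hf : IsTPRatioLimit f) (hfg : ∀ r, 0 < r → f r = g r) : IsTPRatioLimit g := by
  obtain ⟨φ, hφ, hbound, hlim⟩ := hf
  exact ⟨φ, hφ, hbound, fun r hr hr1 => hfg r hr ▸ hlim r hr hr1⟩

theorem integral (hf : IsTPRatioLimit f) : IsTPRatioLimit fun r => ∫ s in (0 : ℝ)..r, f s := by
  obtain ⟨φ, hφ, hbound, hlim⟩ := hf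
  refine ⟨fun N r => ∫ s in (0 : ℝ)..r, φ N s, fun N =>
    ⟨intervalIntegral.continuous_primitive (fun _ _ => (hφ N).1.intervalIntegrable _ _) 0,
      (hφ N).2.integral (hφ N).1⟩, fun R => ?_, fun r hr _ => ?_⟩
  · obtain ⟨C, hC⟩ := hbound R
    refine ⟨|C| * |R|, fun N r hr => ?_⟩
    have hle : ‖∫ s in (0 : ℝ)..r, φ N s‖ ≤ |C| * |r - 0| :=
      intervalIntegral.norm_integral_le_of_norm_le_const fun s hs => by
        rw [uIoc_of_le hr.1] at hs
        exact (hC N s ⟨hs.1.le, hs.2.trans hr.2⟩).trans (le_abs_self C)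
    rw [sub_zero] at hle
    exact hle.trans (mul_le_mul_of_nonneg_left (abs_le_abs_of_nonneg hr.1 hr.2) (abs_nonneg C))
  · obtain ⟨C, hC⟩ := hbound r
    refine intervalIntegral.tendsto_integral_filter_of_dominated_convergence (fun _ => C)
      (Eventually.of_forall fun N => (hφ N).1.aestronglyMeasurable)
      (Eventually.of_forall fun N => MeasureTheory.ae_of_all _ fun s hs => ?_)
      intervalIntegrable_const ?_
    · rw [uIoc_of_le hr.le] at hs
      exact hC N s (Ioc_subset_Icc_self hs)
    · filter_upwards [MeasureTheory.Measure.ae_ne MeasureTheory.volume 1] with s hs1 hs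
      rw [uIoc_of_le hr.le] at hs
      exact hlim s hs.1 hs1

theorem indicator_integral (hf : IsTPRatioLimit ((Ioi 1).indicator f)) :
    IsTPRatioLimit ((Ioi 1).indicator fun r => ∫ s in (1 : ℝ)..r, f s) :=
  hf.integral.congr fun _ hr => intervalIntegral_indicator_Ioi f zero_le_one hr.le

end IsTPRatioLimit

theorem tendsto_pow_div_one_add_pow {r : ℝ} (hr : 0 ≤ r) (hr1 : r ≠ 1) :
    Tendsto (fun N : ℕ => r ^ N / (1 + r ^ N)) atTop (𝓝 ((Ioi 1).indicator 1 r)) := by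
  rcases hr1.lt_or_gt with hlt | hgt
  · have hpow := tendsto_pow_atTop_nhds_zero_of_lt_one hr hlt
    simpa [hlt.le, Pi.div_def] using hpow.div (hpow.const_add 1) (by simp)
  · have hinv := tendsto_inv_atTop_zero.comp (tendsto_pow_atTop_atTop_of_one_lt hgt)
    have hlim : Tendsto (fun N : ℕ => ((r ^ N)⁻¹ + 1)⁻¹) atTop (𝓝 1) := by
      simpa using (hinv.add_const 1).inv₀ (by simp)
    rw [indicator_of_mem (mem_Ioi.2 hgt)]
    refine hlim.congr fun N => ?_
    have : r ^ N ≠ 0 := (pow_pos (one_pos.trans hgt) N).ne'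
    field_simp

theorem isTPRatioLimit_indicator_id : IsTPRatioLimit ((Ioi 1).indicator id) := by
  have heven (N : ℕ) (r : ℝ) : 0 ≤ r ^ (2 * (N + 1)) := (even_two_mul _).pow_nonneg r
  refine ⟨fun N r => r * (r ^ (2 * (N + 1)) / (1 + r ^ (2 * (N + 1)))), fun N => ⟨?_, ?_⟩,
    fun R => ⟨R, fun N r hr => ?_⟩, fun r hr hr1 => ?_⟩
  · exact continuous_id.mul <| (continuous_pow _).div₀ (by fun_prop) fun r => by
      have := heven N r
      positivity
  · simpa only [Real.rpow_one] using
      (IsTPRatio.pow_div_one_add_pow (Nat.mul_ne_zero two_ne_zero N.succ_ne_zero)).rpow_mul 1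
  · have hfrac : r ^ (2 * (N + 1)) / (1 + r ^ (2 * (N + 1))) ≤ 1 :=
      div_le_one_of_le₀ (by linarith [heven N r]) (by linarith [heven N r])
    rw [Real.norm_of_nonneg (mul_nonneg hr.1 (div_nonneg (heven N r) (by linarith [heven N r])))]
    exact (mul_le_of_le_one_right hr.1 hfrac).trans hr.2
  · have hexp : Tendsto (fun N : ℕ => 2 * (N + 1)) atTop atTop :=
      tendsto_atTop_mono (fun N => (by omega : N ≤ 2 * (N + 1))) tendsto_id
    have hind : (Ioi 1).indicator id r = r * (Ioi 1).indicator 1 r := by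
      simp only [indicator_apply, id, Pi.one_apply, mul_ite, mul_one, mul_zero]
    rw [hind]
    exact ((tendsto_pow_div_one_add_pow hr.le hr1).comp hexp).const_mul r

theorem isTPRatioLimit_indicator_sq_sub_one :
    IsTPRatioLimit ((Ioi 1).indicator fun r => (r ^ 2 - 1) / 2) := by
  convert isTPRatioLimit_indicator_id.indicator_integral using 3 with r
  simp

theorem isTPRatioLimit_indicator_cube_sub_add :
    IsTPRatioLimit ((Ioi 1).indicator fun r => (r ^ 3 - 3 * r + 2) / 6) := by
  convert isTPRatioLimit_indicator_sq_sub_one.indicator_integral using 3 with r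
  rw [intervalIntegral.integral_div, intervalIntegral.integral_sub (by simp) (by simp)]
  simp only [integral_pow, Nat.reduceAdd, one_pow, Nat.cast_ofNat, intervalIntegral.integral_const,
    smul_eq_mul, mul_one]
  ring

theorem tendsto_matrix_det {ι α R : Type*} [Fintype ι] [DecidableEq ι] [CommRing R]
    [TopologicalSpace R] [IsTopologicalRing R] {l : Filter α} {M : α → Matrix ι ι R}
    {A : Matrix ι ι R} (h : ∀ i j, Tendsto (fun a => M a i j) l (𝓝 (A i j))) :
    Tendsto (fun a => (M a).det) l (𝓝 A.det) :=
  (continuous_id.matrix_det.tendsto A).comp <|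
    tendsto_pi_nhds.2 fun i => tendsto_pi_nhds.2 fun j => h i j

theorem tendsto_int_floor_mul_div_atTop {𝕜 : Type*} [Field 𝕜] [LinearOrder 𝕜]
    [IsStrictOrderedRing 𝕜] [TopologicalSpace 𝕜] [OrderTopology 𝕜] [FloorRing 𝕜] (s : 𝕜) :
    Tendsto (fun t : 𝕜 => (⌊s * t⌋ : 𝕜) / t) atTop (𝓝 s) := by
  have hlower : Tendsto (fun t : 𝕜 => s - t⁻¹) atTop (𝓝 s) := by
    simpa using tendsto_inv_atTop_zero.const_sub s
  refine tendsto_of_tendsto_of_tendsto_of_le_of_le' hlower tendsto_const_nhds ?_ ?_ <;>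
    filter_upwards [eventually_gt_atTop 0] with t ht
  · rw [le_div_iff₀ ht, sub_mul, inv_mul_cancel₀ ht.ne']
    exact (Int.sub_one_lt_floor _).le
  · rw [div_le_iff₀ ht]
    exact Int.floor_le _

theorem AdmissiblePair.exists_centered_progression {X Y : Set ℝ} (hXY : AdmissiblePair X Y)
    (M : ℕ) : ∃ x y h : ℝ, 0 < h ∧
      ∀ k : ℤ, k.natAbs ≤ M → x + k * h ∈ X ∧ y + k * h ∈ Y := by
  obtain ⟨x, y, h, hh, hX, hY⟩ := hXY (2 * M + 2) (by omega)
  refine ⟨x + M * h, y + M * h, h, hh, fun k hk => ?_⟩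
  obtain ⟨i, hi⟩ := Int.eq_ofNat_of_zero_le (show 0 ≤ k + M by omega)
  have hi' : (i : ℝ) = k + M := by exact_mod_cast hi.symm
  have hshift (c : ℝ) : c + M * h + k * h = c + i * h := by rw [hi']; ring
  rw [hshift, hshift]
  exact ⟨hX i (by omega), hY i (by omega)⟩

/-- Entrywise application of `F` maps totally positive Toeplitz kernels on `X × Y` to totally
positive kernels; the image is again Toeplitz automatically. -/
def PreservesTPToeplitz (X Y : Set ℝ) (F : ℝ → ℝ) : Prop :=
  ∀ K : X → Y → ℝ, (∃ f : ℝ → ℝ, ∀ (a : X) (b : Y), K a b = f ((a : ℝ) - (b : ℝ))) →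
    IsTPKernel K → IsTPKernel fun a b => F (K a b)

/-- All `n × n` minors of the kernel `(p, z) ↦ ψ (p * z)` on `(0, 1] × (0, 1)` have the weak sign
`σ`: sign regularity of order `n` in the sense of Karlin. -/
def HasMinorSign (n : ℕ) (σ : ℝ) (ψ : ℝ → ℝ) : Prop :=
  ∀ p z : Fin n → ℝ, (∀ i, p i ∈ Ioc 0 1) → (∀ j, z j ∈ Ioo 0 1) → StrictMono p → StrictMono z →
    0 ≤ σ * (Matrix.of fun i j => ψ (p i * z j)).det

namespace PreservesTPToeplitz

variable {X Y : Set ℝ} {F φ f : ℝ → ℝ}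

theorem det_exp_lattice_pos (hF : PreservesTPToeplitz X Y F) (hXY : AdmissiblePair X Y)
    (hφ : IsTPRatio φ) {n : ℕ} {k l : Fin n → ℤ} (hk : StrictMono k) (hl : StrictMono l)
    {θ : ℝ} (hθ : 0 < θ) :
    0 < (Matrix.of fun i j => F (φ (Real.exp (k i * θ) / Real.exp (l j * θ)))).det := by
  obtain ⟨x, y, h, hh, hmem⟩ := hXY.exists_centered_progression
    (∑ i, (k i).natAbs + ∑ j, (l j).natAbs)
  have hkX (i : Fin n) : x + k i * h ∈ X := (hmem (k i) <| le_add_right <|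
    Finset.single_le_sum (f := fun i => (k i).natAbs) (fun _ _ => Nat.zero_le _)
      (Finset.mem_univ i)).1
  have hlY (j : Fin n) : y + l j * h ∈ Y := (hmem (l j) <| le_add_left <|
    Finset.single_le_sum (f := fun i => (l i).natAbs) (fun _ _ => Nat.zero_le _)
      (Finset.mem_univ j)).2
  have hlat {k : Fin n → ℤ} (hk : StrictMono k) (c : ℝ) : StrictMono fun i => c + k i * h :=
    fun i j hij => by simpa [hh] using hk hij
  let rescale (c a : ℝ) : Ioi (0 : ℝ) := ⟨Real.exp ((a - c) / h * θ), Real.exp_pos _⟩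
  have hrescale (c : ℝ) : StrictMono (rescale c) := fun a b hab =>
    Real.exp_lt_exp.2 (mul_lt_mul_of_pos_right
      (div_lt_div_of_pos_right (sub_lt_sub_right hab c) hh) hθ)
  have hTP := hF (fun a b => φ (rescale x a / rescale y b))
    ⟨fun t => φ (Real.exp ((t - (x - y)) / h * θ)), fun a b => by
      rw [← Real.exp_sub]
      ring_nf⟩
    (IsTPKernel.comp_strictMono hφ (f := fun a : X => rescale x a) (g := fun b : Y => rescale y b)
      (fun _ _ hab => hrescale x hab) fun _ _ hab => hrescale y hab)
  simpa [rescale, hh.ne'] using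
    hTP n (fun i => ⟨_, hkX i⟩) (fun j => ⟨_, hlY j⟩) (hlat hk x) (hlat hl y)

theorem map_mul_map_neg_lt_sq (hF : PreservesTPToeplitz X Y F) (hXY : AdmissiblePair X Y)
    (hφ : IsTPRatio φ) {t : ℝ} (ht : 0 < t) :
    F (φ (Real.exp t)) * F (φ (Real.exp (-t))) < F (φ 1) ^ 2 := by
  have hk : StrictMono ![(0 : ℤ), 1] := by simp
  have hdet := hF.det_exp_lattice_pos hXY hφ hk hk ht
  simp only [Matrix.det_fin_two, ← Real.exp_sub, Matrix.of_apply, Matrix.cons_val_zero,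
    Matrix.cons_val_one, Int.cast_zero, Int.cast_one, zero_mul, one_mul, sub_self, Real.exp_zero,
    sub_zero, zero_sub] at hdet
  linarith

-- The kernel `exp (u + β t) / cosh t` in `t = log r` takes the three prescribed values
-- `exp u`, `exp v`, `exp w` at `0`, `T`, `-T`.
theorem log_map_exp_add_lt (hF : PreservesTPToeplitz X Y F) (hXY : AdmissiblePair X Y)
    (hFpos : ∀ x, 0 < x → 0 < F x) {u v w : ℝ} (huvw : v + w < 2 * u) :
    Real.log (F (Real.exp v)) + Real.log (F (Real.exp w)) < 2 * Real.log (F (Real.exp u)) := by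
  have hgap : 0 < u - (v + w) / 2 := by linarith
  set T := Real.arcosh (Real.exp (u - (v + w) / 2))
  have hTpos : 0 < T := Real.arcosh_pos (Real.one_lt_exp_iff.2 hgap)
  have hcosh : Real.cosh T = Real.exp (u - (v + w) / 2) :=
    Real.cosh_arcosh (Real.one_le_exp hgap.le)
  let β := (v - w) / (2 * T)
  have hβ : β * T = (v - w) / 2 := by simp only [β]; field_simp
  let φ : ℝ → ℝ := fun r => 2 * Real.exp u * (r ^ (β - 1) * (r ^ 2 / (1 + r ^ 2)))
  have hφ : IsTPRatio φ :=
    ((IsTPRatio.pow_div_one_add_pow two_ne_zero).rpow_mul (β - 1)).const_mul (by positivity)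
  have hφ_exp (t : ℝ) : φ (Real.exp t) = Real.exp (u + β * t) / Real.cosh t := by
    simp only [φ, Real.cosh_eq, ← Real.exp_mul, Real.exp_add, mul_sub_one, Real.exp_sub,
      Real.exp_neg, mul_comm t β, pow_two]
    field_simp
    ring
  have hlt := hF.map_mul_map_neg_lt_sq hXY hφ hTpos
  rw [hφ_exp, hφ_exp, Real.cosh_neg, hcosh, ← Real.exp_sub, ← Real.exp_sub, mul_neg, hβ,
    ← Real.exp_zero, hφ_exp, mul_zero, add_zero, Real.cosh_zero, div_one] at hlt
  have hlog := Real.log_lt_log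
    (mul_pos (hFpos _ (Real.exp_pos _)) (hFpos _ (Real.exp_pos _))) hlt
  rw [Real.log_mul (hFpos _ (Real.exp_pos _)).ne' (hFpos _ (Real.exp_pos _)).ne', Real.log_pow]
    at hlog
  convert hlog using 4 <;> ring_nf

theorem det_nonneg (hF : PreservesTPToeplitz X Y F) (hXY : AdmissiblePair X Y)
    (hFcont : ContinuousOn F (Ioi 0)) (hφ : IsTPRatio φ) (hφcont : ContinuousOn φ (Ioi 0)) {n : ℕ}
    {u v : Fin n → ℝ} (hu : ∀ i, 0 < u i) (hv : ∀ j, 0 < v j) (hu_mono : StrictMono u)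
    (hv_mono : StrictMono v) : 0 ≤ (Matrix.of fun i j => F (φ (u i / v j))).det := by
  let s (u : Fin n → ℝ) (t : ℝ) (i : Fin n) : ℝ := ⌊Real.log (u i) * t⌋ * t⁻¹
  have hs_lim (u : Fin n → ℝ) (i : Fin n) :
      Tendsto (fun t => s u t i) atTop (𝓝 (Real.log (u i))) := tendsto_int_floor_mul_div_atTop _
  have hs_mono {u : Fin n → ℝ} (hu : ∀ i, 0 < u i) (hu_mono : StrictMono u) :
      ∀ᶠ t in atTop, StrictMono fun i => ⌊Real.log (u i) * t⌋ := by
    have hlt : ∀ᶠ t in atTop, ∀ i j, i < j → s u t i < s u t j := by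
      simp only [eventually_all]
      exact fun i j hij =>
        (hs_lim u i).eventually_lt (hs_lim u j) (Real.log_lt_log (hu i) (hu_mono hij))
    filter_upwards [hlt, eventually_gt_atTop 0] with t hlt ht i j hij
    exact_mod_cast lt_of_mul_lt_mul_right (hlt i j hij) (inv_nonneg.2 ht.le)
  have hratio (i j : Fin n) : Tendsto (fun t => Real.exp (s u t i) / Real.exp (s v t j)) atTop
      (𝓝 (u i / v j)) := by
    have h := ((Real.continuous_exp.tendsto _).comp (hs_lim u i)).div
      ((Real.continuous_exp.tendsto _).comp (hs_lim v j)) (Real.exp_ne_zero _)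
    rwa [Real.exp_log (hu i), Real.exp_log (hv j)] at h
  refine ge_of_tendsto (tendsto_matrix_det fun i j => ?_) ?_ (x := atTop)
    (f := fun t : ℝ => (Matrix.of fun i j => F (φ (Real.exp (s u t i) / Real.exp (s v t j)))).det)
  · have hpos : 0 < φ (u i / v j) := hφ.pos (div_pos (hu i) (hv j))
    exact (hFcont.continuousAt (Ioi_mem_nhds hpos)).tendsto.comp
      ((hφcont.continuousAt (Ioi_mem_nhds (div_pos (hu i) (hv j)))).tendsto.comp (hratio i j))
  · filter_upwards [hs_mono hu hu_mono, hs_mono hv hv_mono, eventually_gt_atTop 0] with t hku hkv ht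
    exact (hF.det_exp_lattice_pos hXY hφ hku hkv (inv_pos.2 ht)).le

theorem hasMinorSign (hF : PreservesTPToeplitz X Y F) (hXY : AdmissiblePair X Y)
    (hFcont : ContinuousOn F (Ioi 0)) (hf : IsTPRatioLimit f) {c : ℝ} (hc : 0 < c) (β : ℝ)
    {ρ : ℝ → ℝ} (hρ : ∀ x ∈ Ioo (0 : ℝ) 1, 0 < ρ x ∧ ρ x = c * (x⁻¹ ^ β * f x⁻¹)) (n : ℕ) :
    HasMinorSign n (Equiv.Perm.sign (Fin.revPerm (n := n)) : ℤ) fun x => F (ρ x) := by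
  intro p z hp hz hp_mono hz_mono
  obtain ⟨φ, hφ, -, hlim⟩ := hf
  let u : Fin n → ℝ := fun i => (p i.rev)⁻¹
  have hu (i : Fin n) : 0 < u i := inv_pos.2 (hp _).1
  have hu_mono : StrictMono u := fun i j hij =>
    (inv_lt_inv₀ (hp _).1 (hp _).1).2 (hp_mono (Fin.rev_lt_rev.2 hij))
  have hprod (i j : Fin n) : p i.rev * z j ∈ Ioo (0 : ℝ) 1 :=
    ⟨mul_pos (hp _).1 (hz j).1, mul_lt_one_of_nonneg_of_lt_one_right (hp _).2 (hz j).1.le (hz j).2⟩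
  have hratio (i j : Fin n) : u i / z j = (p i.rev * z j)⁻¹ := by
    rw [mul_inv, div_eq_mul_inv]
  have happrox (N : ℕ) :
      0 ≤ (Matrix.of fun i j => F (c * ((u i / z j) ^ β * φ N (u i / z j)))).det :=
    hF.det_nonneg hXY hFcont (((hφ N).2.rpow_mul β).const_mul hc)
      (continuousOn_const.mul <| (continuousOn_id.rpow_const fun r hr => .inl (ne_of_gt hr)).mul
        (hφ N).1.continuousOn) hu (fun j => (hz j).1) hu_mono hz_mono
  have hdet : 0 ≤ (Matrix.of fun i j => F (ρ (p (Fin.revPerm i) * z j))).det := by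
    refine ge_of_tendsto' (tendsto_matrix_det fun i j => ?_) happrox (x := atTop)
    obtain ⟨hpos, heq⟩ := hρ _ (hprod i j)
    simp only [Matrix.of_apply, Fin.revPerm_apply, hratio]
    refine (hFcont.continuousAt (Ioi_mem_nhds hpos)).tendsto.comp ?_
    rw [heq]
    exact ((hlim _ (inv_pos.2 (hprod i j).1)
      (inv_ne_one.2 (hprod i j).2.ne)).const_mul _).const_mul _
  rwa [← Matrix.det_permute]

end PreservesTPToeplitz

theorem continuous_of_add_lt_two_mul {g : ℝ → ℝ}
    (hg : ∀ u v w, v + w < 2 * u → g v + g w < 2 * g u) : Continuous g := by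
  have hmono : Monotone g := fun v u hvu => by
    obtain rfl | hlt := hvu.eq_or_lt
    · rfl
    · linarith [hg u v v (by linarith)]
  refine continuous_iff_continuousAt.2 fun u => hmono.continuousAt_iff_leftLim_eq_rightLim.2 <|
    (hmono.leftLim_le_rightLim le_rfl).antisymm ?_
  have hjump : ∀ v < u, g v + rightLim g u ≤ 2 * leftLim g u := fun v hv => by
    have hlt := hg (u - (u - v) / 4) v (u + (u - v) / 4) (by linarith)
    have hleft : g (u - (u - v) / 4) ≤ leftLim g u := hmono.le_leftLim (by linarith)
    have hright : rightLim g u ≤ g (u + (u - v) / 4) := hmono.rightLim_le (by linarith)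
    linarith
  have hlim := le_of_tendsto ((hmono.tendsto_leftLim u).add_const _)
    (eventually_nhdsWithin_of_forall hjump)
  linarith

-- At its least minimizer on `[x, y]`, a midpoint concave function cannot be interior: the
-- reflection of a nearby point would give a smaller minimizer.
theorem nonneg_of_midpoint_concave {h : ℝ → ℝ} (hcont : Continuous h)
    (hmid : ∀ v w, h v + h w ≤ 2 * h ((v + w) / 2)) {x y t : ℝ} (hx : 0 ≤ h x) (hy : 0 ≤ h y)
    (ht : t ∈ Icc x y) : 0 ≤ h t := by
  by_contra! hneg
  obtain ⟨m, hm, hmin⟩ := isCompact_Icc.exists_isMinOn ⟨t, ht⟩ hcont.continuousOn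
  obtain ⟨s, ⟨hs, hsm⟩, hleast⟩ := (isCompact_Icc.inter_right
    (isClosed_le hcont continuous_const)).exists_isLeast ⟨m, hm, le_refl (h m)⟩
  have hsneg : h s < 0 := (hsm.trans (hmin ht)).trans_lt hneg
  have hxs : x < s := hs.1.lt_of_ne fun heq => (heq ▸ hx).not_gt hsneg
  have hsy : s < y := hs.2.lt_of_ne fun heq => (heq ▸ hy).not_gt hsneg
  obtain ⟨δ, hδ, hδ_lt⟩ := exists_between (lt_min (sub_pos.2 hxs) (sub_pos.2 hsy))
  have hδx : δ < s - x := hδ_lt.trans_le (min_le_left _ _)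
  have hδy : δ < y - s := hδ_lt.trans_le (min_le_right _ _)
  have hright : h m ≤ h (s + δ) := hmin ⟨by linarith, by linarith⟩
  have hmid' := hmid (s - δ) (s + δ)
  rw [sub_add_add_cancel, add_self_div_two] at hmid'
  have hleft : h (s - δ) ≤ h m := by linarith [show h s ≤ h m from hsm]
  linarith [hleast ⟨⟨by linarith, by linarith⟩, hleft⟩]

theorem concaveOn_univ_of_midpoint {g : ℝ → ℝ} (hcont : Continuous g)
    (hmid : ∀ v w, g v + g w ≤ 2 * g ((v + w) / 2)) : ConcaveOn ℝ univ g := by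
  refine LinearOrder.concaveOn_of_lt convex_univ fun x _ y _ hxy a b ha hb hab => ?_
  let p := (g y - g x) / (y - x)
  have hp : p * (y - x) = g y - g x := div_mul_cancel₀ _ (sub_pos.2 hxy).ne'
  have hchord := nonneg_of_midpoint_concave (h := fun t => g t - (g x + p * (t - x)))
    (x := x) (y := y) (t := a • x + b • y) (by fun_prop) (fun v w => by linarith [hmid v w])
    (by simp) (by simp [hp])
    (convex_Icc x y (left_mem_Icc.2 hxy.le) (right_mem_Icc.2 hxy.le) ha.le hb.le hab)
  have hline : g x + p * (a • x + b • y - x) = a • g x + b • g y := by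
    obtain rfl : a = 1 - b := by linarith
    simp only [smul_eq_mul]
    linear_combination b * hp
  linarith

theorem concaveOn_univ_of_add_lt_two_mul {g : ℝ → ℝ}
    (hg : ∀ u v w, v + w < 2 * u → g v + g w < 2 * g u) : ConcaveOn ℝ univ g := by
  have hcont := continuous_of_add_lt_two_mul hg
  refine concaveOn_univ_of_midpoint hcont fun v w => ?_
  have hlim : Tendsto (fun u => 2 * g u) (𝓝[>] ((v + w) / 2)) (𝓝 (2 * g ((v + w) / 2))) :=
    ((hcont.tendsto _).mono_left nhdsWithin_le_nhds).const_mul 2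
  refine ge_of_tendsto hlim (eventually_nhdsWithin_of_forall fun u hu => (hg u v w ?_).le)
  linarith [mem_Ioi.1 hu]

theorem exists_pos_hasDerivWithinAt_Iio_of_concaveOn {g : ℝ → ℝ} (hconc : ConcaveOn ℝ univ g)
    (hmono : StrictMono g) (s : ℝ) :
    ∃ α > 0, HasDerivWithinAt g α (Iio s) s ∧ ∀ t < s, g t ≤ g s + α * (t - s) := by
  have hconv := hconc.neg
  have hs : s ∈ interior (univ : Set ℝ) := by simp
  have hright := (hconv.leftDeriv_le_rightDeriv_of_mem_interior hs).trans
    (hconv.rightDeriv_le_slope_of_mem_interior hs (mem_univ (s + 1)) (lt_add_one s))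
  have hderiv := (hconv.hasDerivWithinAt_leftDeriv_of_mem_interior hs).neg
  rw [neg_neg] at hderiv
  refine ⟨_, ?_, hderiv, fun t ht => ?_⟩
  · have hlt : slope (-g) s (s + 1) < 0 := by
      simpa [slope_def_field] using hmono (lt_add_one s)
    exact neg_pos.2 (hright.trans_lt hlt)
  · have hle := hconc.le_slope_of_hasDerivWithinAt_Iio (mem_univ t) (mem_univ s) ht hderiv
    rw [slope_def_field, le_div_iff₀ (sub_pos.2 ht)] at hle
    linarith

theorem eq_exp_log_conj {F : ℝ → ℝ} (hF : ∀ x, 0 < x → 0 < F x) {x : ℝ} (hx : 0 < x) :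
    F x = Real.exp (Real.log (F (Real.exp (Real.log x)))) := by
  rw [Real.exp_log hx, Real.exp_log (hF x hx)]

theorem exists_log_derivative {F : ℝ → ℝ} (hF : ∀ x, 0 < x → 0 < F x)
    (hconc : ConcaveOn ℝ univ fun t => Real.log (F (Real.exp t)))
    (hmono : StrictMono fun t => Real.log (F (Real.exp t))) {A : ℝ} (hA : 0 < A) :
    ∃ α > 0, (∀ δ ∈ Ioo (0 : ℝ) 1, F (A * (1 - δ)) ≤ F A * (1 - δ) ^ α) ∧
      HasDerivWithinAt (fun δ => F (A * (1 - δ))) (-(F A * α)) (Ioo 0 1) 0 := by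
  obtain ⟨α, hα, hderiv, hle⟩ :=
    exists_pos_hasDerivWithinAt_Iio_of_concaveOn hconc hmono (Real.log A)
  have hlog {δ : ℝ} (hδ : δ ∈ Ioo (0 : ℝ) 1) : Real.log (A * (1 - δ)) < Real.log A :=
    Real.log_lt_log (mul_pos hA (sub_pos.2 hδ.2)) (mul_lt_of_lt_one_right hA (by linarith [hδ.1]))
  refine ⟨α, hα, fun δ hδ => ?_, ?_⟩
  · have hδ1 : 0 < 1 - δ := sub_pos.2 hδ.2
    rw [eq_exp_log_conj hF (mul_pos hA hδ1), eq_exp_log_conj hF hA, Real.rpow_def_of_pos hδ1,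
      ← Real.exp_add, Real.exp_le_exp]
    refine (hle _ (hlog hδ)).trans_eq ?_
    rw [Real.log_mul hA.ne' hδ1.ne']
    ring
  · have hinner : HasDerivAt (fun δ : ℝ => Real.log (A * (1 - δ))) (-1) 0 := by
      have h := (((hasDerivAt_id (0 : ℝ)).const_sub 1).const_mul A).log (by simpa using hA.ne')
      simpa [hA.ne'] using h
    have h0 : A * (1 - 0) = A := by ring
    have houter := HasDerivWithinAt.comp (h₂ := fun t => Real.log (F (Real.exp t)))
      (s' := Iio (Real.log A)) (0 : ℝ) (by rwa [h0]) hinner.hasDerivWithinAt fun δ hδ => hlog hδ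
    have hslope : -(F A * α) = Real.exp (Real.log (F (Real.exp (Real.log (A * (1 - 0)))))) *
        (α * -1) := by
      rw [h0, ← eq_exp_log_conj hF hA]
      ring
    rw [hslope]
    exact houter.exp.congr (fun δ hδ => eq_exp_log_conj hF (mul_pos hA (sub_pos.2 hδ.2)))
      (eq_exp_log_conj hF (h0.symm ▸ hA))

open Asymptotics Matrix

theorem tendsto_mul_const_nhdsGT_zero {y : ℝ} (hy : 0 < y) :
    Tendsto (fun x => x * y) (𝓝[>] 0) (𝓝[>] 0) :=
  tendsto_nhdsWithin_iff.2 ⟨by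
    simpa using ((continuous_mul_const y).tendsto 0).mono_left nhdsWithin_le_nhds,
    eventually_nhdsWithin_of_forall fun _ hx => mul_pos (mem_Ioi.1 hx) hy⟩

theorem eventually_forall_mul_mem_Ioo {ι : Type*} [Finite ι] {y : ι → ℝ} (hy : ∀ i, 0 < y i)
    {w : ℝ} (hw : 0 < w) : ∀ᶠ ε in 𝓝[>] 0, ∀ i, ε * y i ∈ Ioo 0 w :=
  eventually_all.2 fun i => tendsto_mul_const_nhdsGT_zero (hy i) (Ioo_mem_nhdsGT hw)

theorem isLittleO_pow_comp_mul_const {R : ℝ → ℝ} {E : ℕ} (hR : R =o[𝓝[>] 0] fun x => x ^ E)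
    {y : ℝ} (hy : 0 < y) : (fun x => R (x * y)) =o[𝓝[>] 0] fun x => x ^ E := by
  refine (hR.comp_tendsto (tendsto_mul_const_nhdsGT_zero hy)).trans_isBigO ?_
  simpa only [comp_def, mul_pow, mul_comm _ (y ^ E)] using
    (isBigO_refl (fun x : ℝ => x ^ E) _).const_mul_left (y ^ E)

section Extraction

variable {ι τ κ : Type*} [Fintype ι] [DecidableEq ι] [Fintype τ] [DecidableEq τ]
  {e : ι → ℕ} {E : ℕ} {y : ι → ℝ}

theorem tendsto_diagonal_mul_inv_vandermonde_mul {f : κ → ℝ → ℝ} {a : Matrix ι κ ℝ}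
    (he : ∀ k, e k ≤ E) (hy : ∀ i, 0 < y i)
    (hV : IsUnit (Matrix.of fun i k => y i ^ e k).det)
    (hf : ∀ j, (fun x => f j x - ∑ k, a k j * x ^ e k) =o[𝓝[>] 0] fun x => x ^ E) (k : ι) (j : κ) :
    Tendsto (fun ε : ℝ => (diagonal (fun k => (ε ^ e k)⁻¹) *
      ((Matrix.of fun i k => y i ^ e k)⁻¹ * Matrix.of fun i j => f j (ε * y i))) k j)
      (𝓝[>] 0) (𝓝 (a k j)) := by
  set V : Matrix ι ι ℝ := Matrix.of fun i k => y i ^ e k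
  let R (ε : ℝ) : Matrix ι κ ℝ :=
    Matrix.of fun i j => f j (ε * y i) - ∑ k, a k j * (ε * y i) ^ e k
  have hsplit (ε : ℝ) : (Matrix.of fun i j => f j (ε * y i)) =
      V * (diagonal (fun k => ε ^ e k) * a) + R ε := by
    ext i j
    rw [Matrix.add_apply, mul_apply, ← sub_eq_iff_eq_add']
    simp only [of_apply, V, R, diagonal_mul, mul_pow]
    congr 1
    exact Finset.sum_congr rfl fun k _ => by ring
  have hresidual (i : ι) : Tendsto (fun ε : ℝ => R ε i j / ε ^ e k) (𝓝[>] 0) (𝓝 0) := by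
    refine ((isLittleO_pow_comp_mul_const (hf j) (hy i)).trans_isBigO ?_).tendsto_div_nhds_zero
    refine IsBigO.of_bound 1 ?_
    filter_upwards [Ioo_mem_nhdsGT one_pos] with x hx
    rw [one_mul, norm_pow, norm_pow]
    exact pow_le_pow_of_le_one (norm_nonneg x)
      ((Real.norm_of_nonneg hx.1.le).trans_le hx.2.le) (he k)
  have hlim : Tendsto (fun ε : ℝ => a k j + ∑ i, V⁻¹ k i * (R ε i j / ε ^ e k)) (𝓝[>] 0)
      (𝓝 (a k j)) := by
    simpa using (tendsto_finsetSum Finset.univ fun i _ =>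
      (hresidual i).const_mul (V⁻¹ k i)).const_add (a k j)
  refine hlim.congr' (eventually_nhdsWithin_of_forall fun ε hε => ?_)
  have hε' : ε ^ e k ≠ 0 := pow_ne_zero _ (ne_of_gt (mem_Ioi.1 hε))
  beta_reduce
  rw [hsplit, Matrix.mul_add, nonsing_inv_mul_cancel_left _ _ hV, diagonal_mul, Matrix.add_apply,
    diagonal_mul, mul_apply, mul_add, inv_mul_cancel_left₀ hε', Finset.mul_sum]
  congr 1
  exact Finset.sum_congr rfl fun i _ => by ring

theorem det_fromRows_coeff_nonneg {f : ι ⊕ τ → ℝ → ℝ} {a : Matrix ι (ι ⊕ τ) ℝ}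
    {b : Matrix τ (ι ⊕ τ) ℝ} {σ : ℝ} (he : ∀ k, e k ≤ E) (hy : ∀ i, 0 < y i)
    (hV : 0 < (Matrix.of fun i k => y i ^ e k).det)
    (hf : ∀ j, (fun x => f j x - ∑ k, a k j * x ^ e k) =o[𝓝[>] 0] fun x => x ^ E)
    (hdet : ∀ᶠ ε in 𝓝[>] 0, 0 ≤ σ * (fromRows (Matrix.of fun i j => f j (ε * y i)) b).det) :
    0 ≤ σ * (fromRows a b).det := by
  set V : Matrix ι ι ℝ := Matrix.of fun i k => y i ^ e k
  let D (ε : ℝ) : Matrix ι ι ℝ := diagonal fun k => (ε ^ e k)⁻¹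
  let M (ε : ℝ) : Matrix ι (ι ⊕ τ) ℝ := Matrix.of fun i j => f j (ε * y i)
  have hlim : Tendsto (fun ε => σ * (fromRows (D ε * (V⁻¹ * M ε)) b).det) (𝓝[>] 0)
      (𝓝 (σ * (fromRows a b).det)) := by
    refine (tendsto_matrix_det fun i j => ?_).const_mul σ
    cases i with
    | inl k => exact tendsto_diagonal_mul_inv_vandermonde_mul he hy hV.ne'.isUnit hf k j
    | inr t => exact tendsto_const_nhds
  have hfactor (ε : ℝ) : (fromRows (D ε * (V⁻¹ * M ε)) b).det =
      (D ε).det * V.det⁻¹ * (fromRows (M ε) b).det := by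
    have hblocks : fromRows (D ε * (V⁻¹ * M ε)) b =
        fromBlocks (D ε * V⁻¹) 0 0 1 * fromRows (M ε) b := by
      simp [fromBlocks_mul_fromRows, Matrix.mul_assoc]
    rw [hblocks, det_mul, det_fromBlocks_zero₂₁, det_one, mul_one, det_mul, det_nonsing_inv,
      Ring.inverse_eq_inv]
  refine ge_of_tendsto hlim ?_
  filter_upwards [hdet, self_mem_nhdsWithin] with ε hε hpos
  have hD : 0 < (D ε).det := by
    rw [det_diagonal]
    exact Finset.prod_pos fun k _ => inv_pos.2 (pow_pos (mem_Ioi.1 hpos) _)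
  rw [hfactor, mul_left_comm]
  exact mul_nonneg (mul_pos hD (inv_pos.2 hV)).le hε

end Extraction

theorem strictMono_finSnoc {α : Type*} [Preorder α] {n : ℕ} {p : Fin n → α} {a : α}
    (hp : StrictMono p) (hpa : ∀ i, p i < a) : StrictMono (Fin.snoc p a : Fin (n + 1) → α) := by
  intro i j
  induction i using Fin.lastCases with
  | last => exact fun hij => absurd hij (Fin.le_last j).not_gt
  | cast i =>
    induction j using Fin.lastCases with
    | last => simpa using hpa i
    | cast j => simpa using fun hij => hp hij

namespace HasMinorSign

variable {m E : ℕ} {σ w : ℝ} {ψ : ℝ → ℝ} {e : Fin m → ℕ} {c y z : Fin m → ℝ}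

theorem det_fromRows_nonneg (h : HasMinorSign (m + 1) σ ψ) {p : Fin m → ℝ}
    (hp : ∀ i, p i ∈ Ioo 0 1) (hp_mono : StrictMono p) (hz : ∀ j, z j ∈ Ioo 0 w)
    (hz_mono : StrictMono z) (hw : w ∈ Ioo 0 1) :
    0 ≤ σ * (fromRows (Matrix.of fun i j => ψ (p i * Sum.elim z (fun _ => w) j))
      (Matrix.of fun (_ : Fin 1) j => ψ (Sum.elim z (fun _ => w) j))).det := by
  have hminor := h (Fin.snoc p 1) (Fin.snoc z w)
    (Fin.lastCases (by simp) fun i => by simpa using ⟨(hp i).1, (hp i).2.le⟩)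
    (Fin.lastCases (by simpa using hw) fun j => by simpa using ⟨(hz j).1, (hz j).2.trans hw.2⟩)
    (strictMono_finSnoc hp_mono fun i => (hp i).2) (strictMono_finSnoc hz_mono fun j => (hz j).2)
  have hsnoc (q : Fin m → ℝ) (a : ℝ) (s : Fin m ⊕ Fin 1) :
      (Fin.snoc q a : Fin (m + 1) → ℝ) (finSumFinEquiv s) = Sum.elim q (fun _ => a) s := by
    rcases s with i | i
    · exact Fin.snoc_castSucc ..
    · rw [Subsingleton.elim i 0]
      exact Fin.snoc_last ..
  rw [← det_submatrix_equiv_self finSumFinEquiv] at hminor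
  convert hminor using 3
  ext i j
  rw [submatrix_apply, of_apply, hsnoc, hsnoc]
  cases i <;> simp

theorem prod_mul_det_nonneg (h : HasMinorSign (m + 1) σ ψ) (he : ∀ k, e k ≤ E)
    (hψ : (fun x => ψ x - ∑ k, c k * x ^ e k) =o[𝓝[>] 0] fun x => x ^ E)
    (hy : ∀ i, 0 < y i) (hy_mono : StrictMono y) (hV : 0 < (Matrix.of fun i k => y i ^ e k).det)
    (hz : ∀ j, z j ∈ Ioo 0 w) (hz_mono : StrictMono z) (hw : w ∈ Ioo 0 1) :
    0 ≤ σ * ((∏ k, c k) *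
      (fromRows (Matrix.of fun k j => Sum.elim z (fun _ => w) j ^ e k)
        (Matrix.of fun (_ : Fin 1) j => ψ (Sum.elim z (fun _ => w) j))).det) := by
  set v : Fin m ⊕ Fin 1 → ℝ := Sum.elim z fun _ => w
  have hv (j) : 0 < v j := by
    cases j with
    | inl j => exact (hz j).1
    | inr j => exact hw.1
  have hlimit := det_fromRows_coeff_nonneg (f := fun j x => ψ (x * v j))
    (a := Matrix.of fun k j => c k * v j ^ e k) (b := Matrix.of fun _ j => ψ (v j)) he hy hV
    (fun j => by
      simpa only [of_apply, mul_pow, mul_assoc, mul_comm (v j ^ _)] using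
        isLittleO_pow_comp_mul_const hψ (hv j))
    (by
      filter_upwards [eventually_forall_mul_mem_Ioo hy one_pos, self_mem_nhdsWithin] with ε hε hpos
      exact h.det_fromRows_nonneg hε (hy_mono.const_mul hpos) hz hz_mono hw)
  have hcolumns : fromRows (Matrix.of fun k j => c k * v j ^ e k)
        (Matrix.of fun (_ : Fin 1) j => ψ (v j)) =
      Matrix.of fun i j => Sum.elim c (fun _ => 1) i *
        fromRows (Matrix.of fun k j => v j ^ e k) (Matrix.of fun (_ : Fin 1) j => ψ (v j)) i j := by
    ext (k | k) j <;> simp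
  rw [hcolumns, det_mul_column] at hlimit
  simpa using hlimit

theorem prod_mul_sub_nonneg (h : HasMinorSign (m + 1) σ ψ) (he : ∀ k, e k ≤ E)
    (hψ : (fun x => ψ x - ∑ k, c k * x ^ e k) =o[𝓝[>] 0] fun x => x ^ E)
    (hy : ∀ i, 0 < y i) (hy_mono : StrictMono y) (hV : 0 < (Matrix.of fun i k => y i ^ e k).det)
    (hw : w ∈ Ioo 0 1) :
    0 ≤ σ * ((∏ k, c k) * (ψ w - ∑ k, c k * w ^ e k)) := by
  let f : Fin m ⊕ Fin 1 → ℝ → ℝ := Sum.elim (fun k x => x ^ e k) fun _ => ψ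
  have hlimit := det_fromRows_coeff_nonneg (f := f)
    (a := fromCols 1 (Matrix.of fun k (_ : Fin 1) => c k))
    (b := Matrix.of fun (_ : Fin 1) j => f j w) (σ := σ * ∏ k, c k) he hy hV
    (fun j => by
      cases j with
      | inl k => simp [f, one_apply]
      | inr _ => simpa [f] using hψ)
    (by
      filter_upwards [eventually_forall_mul_mem_Ioo hy hw.1, self_mem_nhdsWithin] with ε hε hpos
      have := h.prod_mul_det_nonneg he hψ hy hy_mono hV hε (hy_mono.const_mul hpos) hw
      rw [← mul_assoc, ← det_transpose] at this
      convert this using 3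
      ext (i | i) (j | _) <;> simp [f])
  have hblocks : fromRows (fromCols 1 (Matrix.of fun k (_ : Fin 1) => c k))
        (Matrix.of fun (_ : Fin 1) j => f j w) =
      fromBlocks 1 (Matrix.of fun k _ => c k) (Matrix.of fun _ k => w ^ e k)
        (Matrix.of fun _ _ => ψ w) := by
    ext (i | i) (j | _) <;> simp [f]
  rw [hblocks, det_fromBlocks_one₁₁, det_fin_one] at hlimit
  simpa [mul_apply, mul_comm, mul_assoc, mul_left_comm] using hlimit

end HasMinorSign

theorem isLittleO_sub_affine_of_hasDerivWithinAt {G d : ℝ → ℝ} {s : ℝ}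
    (hG : HasDerivWithinAt G (-s) (Ioo 0 1) 0) (hd : Tendsto d (𝓝[>] 0) (𝓝[>] 0)) :
    (fun x => G (d x) - (G 0 - s * d x)) =o[𝓝[>] 0] d := by
  have hexpand := hG.isLittleO.mono (nhdsWithin_Ioo_eq_nhdsGT one_pos).ge
  refine (hexpand.comp_tendsto hd).congr (fun x => ?_) fun x => ?_
  · simp only [Function.comp_apply, sub_zero, smul_eq_mul]
    ring
  · simp

theorem isBigO_sq_of_le_rpow {G : ℝ → ℝ} {B α : ℝ} (hB : 0 ≤ B) (hα : 0 < α)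
    (hlower : ∀ δ ∈ Ioo (0 : ℝ) 1, B - B * α * δ ≤ G δ)
    (hupper : ∀ δ ∈ Ioo (0 : ℝ) 1, G δ ≤ B * (1 - δ) ^ α) :
    (fun δ => G δ - (B - B * α * δ)) =O[𝓝[>] 0] fun δ => δ ^ 2 := by
  refine IsBigO.of_bound (B * α ^ 2) ?_
  filter_upwards [Ioo_mem_nhdsGT (lt_min one_pos (inv_pos.2 hα))] with δ ⟨hδ0, hδ⟩
  obtain ⟨hδ1, hδα⟩ := lt_min_iff.1 hδ
  have hrpow : (1 - δ) ^ α ≤ Real.exp (-(α * δ)) := by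
    refine (Real.rpow_le_rpow (sub_nonneg.2 hδ1.le) (Real.one_sub_le_exp_neg δ) hα.le).trans_eq ?_
    rw [← Real.exp_mul, neg_mul, mul_comm]
  have hexp : Real.exp (-(α * δ)) - 1 - -(α * δ) ≤ (-(α * δ)) ^ 2 :=
    (le_abs_self _).trans <| Real.abs_exp_sub_one_sub_id_le <| by
      rw [abs_neg, abs_of_pos (mul_pos hα hδ0)]
      exact ((lt_inv_mul_iff₀ hα).1 (by simpa using hδα)).le
  rw [Real.norm_of_nonneg (sub_nonneg.2 (hlower δ ⟨hδ0, hδ1⟩)), Real.norm_of_nonneg (sq_nonneg δ)]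
  nlinarith [hupper δ ⟨hδ0, hδ1⟩, mul_le_mul_of_nonneg_left hrpow hB,
    mul_le_mul_of_nonneg_left hexp hB]

theorem exists_three_mul_sq_sub_two_mul_cube_eq {δ : ℝ} (hδ : δ ∈ Ioo (0 : ℝ) 1) :
    ∃ w ∈ Ioo (0 : ℝ) 1, 3 * w ^ 2 - 2 * w ^ 3 = δ := by
  have hcont : ContinuousOn (fun w : ℝ => 3 * w ^ 2 - 2 * w ^ 3) (Icc 0 1) := by fun_prop
  exact intermediate_value_Ioo zero_le_one hcont (by norm_num; exact hδ)

theorem tendsto_three_mul_sq_sub_two_mul_cube :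
    Tendsto (fun x : ℝ => 3 * x ^ 2 - 2 * x ^ 3) (𝓝[>] 0) (𝓝[>] 0) := by
  refine tendsto_nhdsWithin_iff.2 ⟨?_, ?_⟩
  · have hcont : Continuous fun x : ℝ => 3 * x ^ 2 - 2 * x ^ 3 := by fun_prop
    simpa using (hcont.tendsto 0).mono_left nhdsWithin_le_nhds
  · filter_upwards [Ioo_mem_nhdsGT one_pos] with x hx
    rw [mem_Ioi]
    nlinarith [pow_pos hx.1 2, mul_pos (pow_pos hx.1 2) (sub_pos.2 hx.2)]

theorem isLittleO_sq_three_mul_sq_sub_two_mul_cube :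
    (fun x : ℝ => (3 * x ^ 2 - 2 * x ^ 3) ^ 2) =o[𝓝[>] 0] fun x => x ^ 3 := by
  have hcont : Continuous fun x : ℝ => x * (3 - 2 * x) ^ 2 := by fun_prop
  have hzero : (fun x : ℝ => x * (3 - 2 * x) ^ 2) =o[𝓝[>] 0] fun _ => (1 : ℝ) :=
    (isLittleO_one_iff ℝ).2 <| by simpa using (hcont.tendsto 0).mono_left nhdsWithin_le_nhds
  exact (hzero.mul_isBigO (isBigO_refl (fun x : ℝ => x ^ 3) _)).congr (fun x => by ring)
    fun x => one_mul _

namespace PreservesTPToeplitz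

variable {X Y : Set ℝ} {F : ℝ → ℝ} {A s α : ℝ}

theorem hasMinorSign_quadratic (hF : PreservesTPToeplitz X Y F) (hXY : AdmissiblePair X Y)
    (hFcont : ContinuousOn F (Ioi 0)) (hA : 0 < A) :
    HasMinorSign 3 (-1) fun x => F (A * (1 - x ^ 2)) := by
  have hsign : ((Equiv.Perm.sign (Fin.revPerm (n := 3)) : ℤ) : ℝ) = -1 := by
    rw [show Equiv.Perm.sign (Fin.revPerm (n := 3)) = -1 by decide]
    simp
  refine hsign ▸ hF.hasMinorSign hXY hFcont isTPRatioLimit_indicator_sq_sub_one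
    (mul_pos two_pos hA) (-2) (fun x hx => ⟨mul_pos hA ?_, ?_⟩) 3
  · nlinarith [hx.1, hx.2]
  · have hx0 : x ≠ 0 := hx.1.ne'
    rw [indicator_of_mem (mem_Ioi.2 ((one_lt_inv₀ hx.1).2 hx.2)), Real.inv_rpow hx.1.le,
      Real.rpow_neg hx.1.le, inv_inv, Real.rpow_ofNat]
    field_simp

theorem hasMinorSign_cubic (hF : PreservesTPToeplitz X Y F) (hXY : AdmissiblePair X Y)
    (hFcont : ContinuousOn F (Ioi 0)) (hA : 0 < A) :
    HasMinorSign 4 1 fun x => F (A * (1 - (3 * x ^ 2 - 2 * x ^ 3))) := by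
  have hsign : ((Equiv.Perm.sign (Fin.revPerm (n := 4)) : ℤ) : ℝ) = 1 := by
    rw [show Equiv.Perm.sign (Fin.revPerm (n := 4)) = 1 by decide]
    simp
  have hminor := hF.hasMinorSign (ρ := fun x => A * (1 - (3 * x ^ 2 - 2 * x ^ 3))) hXY hFcont
    isTPRatioLimit_indicator_cube_sub_add (mul_pos (by norm_num : (0 : ℝ) < 6) hA) (-3)
    (fun x hx => ⟨mul_pos hA ?_, ?_⟩) 4
  · rwa [hsign] at hminor
  · nlinarith [hx.1, mul_pos (pow_pos (sub_pos.2 hx.2) 2) hx.1, pow_pos (sub_pos.2 hx.2) 2]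
  · have hx0 : x ≠ 0 := hx.1.ne'
    rw [indicator_of_mem (mem_Ioi.2 ((one_lt_inv₀ hx.1).2 hx.2)), Real.inv_rpow hx.1.le,
      Real.rpow_neg hx.1.le, inv_inv, Real.rpow_ofNat]
    field_simp
    ring

theorem sub_mul_le_map (hF : PreservesTPToeplitz X Y F) (hXY : AdmissiblePair X Y)
    (hFcont : ContinuousOn F (Ioi 0)) (hA : 0 < A) (hFA : 0 < F A) (hs : 0 < s)
    (hderiv : HasDerivWithinAt (fun δ => F (A * (1 - δ))) (-s) (Ioo 0 1) 0) {δ : ℝ}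
    (hδ : δ ∈ Ioo (0 : ℝ) 1) : F A - s * δ ≤ F (A * (1 - δ)) := by
  have hsq : Tendsto (fun x : ℝ => x ^ 2) (𝓝[>] 0) (𝓝[>] 0) := by
    refine tendsto_nhdsWithin_iff.2 ⟨?_, eventually_nhdsWithin_of_forall fun x hx =>
      pow_pos (mem_Ioi.1 hx) 2⟩
    simpa using ((continuous_pow 2).tendsto (0 : ℝ)).mono_left nhdsWithin_le_nhds
  have hexpand : (fun x => F (A * (1 - x ^ 2)) -
      ∑ k, ![F A, -s] k * x ^ (![0, 2] : Fin 2 → ℕ) k) =o[𝓝[>] 0] fun x => x ^ 2 := by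
    simpa [Fin.sum_univ_succ, sub_eq_add_neg] using
      isLittleO_sub_affine_of_hasDerivWithinAt hderiv hsq
  have hbound := (hF.hasMinorSign_quadratic hXY hFcont hA).prod_mul_sub_nonneg
    (y := ![1, 2]) (w := √δ) (by decide) hexpand (by simp [Fin.forall_fin_succ]) (by simp)
    (by simp [det_fin_two]) ⟨Real.sqrt_pos.2 hδ.1, by rw [Real.sqrt_lt' one_pos]; simpa using hδ.2⟩
  have hproduct : 0 ≤ F A * s * (F (A * (1 - δ)) - (F A - s * δ)) := by
    simpa [Fin.sum_univ_succ, Real.sq_sqrt hδ.1.le, sub_eq_add_neg] using hbound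
  exact sub_nonneg.1 (nonneg_of_mul_nonneg_right hproduct (mul_pos hFA hs))

theorem map_le_sub_mul (hF : PreservesTPToeplitz X Y F) (hXY : AdmissiblePair X Y)
    (hFcont : ContinuousOn F (Ioi 0)) (hA : 0 < A) (hFA : 0 < F A) (hα : 0 < α)
    (hderiv : HasDerivWithinAt (fun δ => F (A * (1 - δ))) (-(F A * α)) (Ioo 0 1) 0)
    (hupper : ∀ δ ∈ Ioo (0 : ℝ) 1, F (A * (1 - δ)) ≤ F A * (1 - δ) ^ α) {δ : ℝ}
    (hδ : δ ∈ Ioo (0 : ℝ) 1) : F (A * (1 - δ)) ≤ F A - F A * α * δ := by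
  have hs : 0 < F A * α := mul_pos hFA hα
  have hremainder : (fun x => F (A * (1 - (3 * x ^ 2 - 2 * x ^ 3))) -
      (F A - F A * α * (3 * x ^ 2 - 2 * x ^ 3))) =o[𝓝[>] 0] fun x => x ^ 3 := by
    have hquadratic := isBigO_sq_of_le_rpow hFA.le hα
      (fun δ hδ => hF.sub_mul_le_map hXY hFcont hA hFA hs hderiv hδ) hupper
    exact (hquadratic.comp_tendsto tendsto_three_mul_sq_sub_two_mul_cube).trans_isLittleO
      isLittleO_sq_three_mul_sq_sub_two_mul_cube
  have hexpand : (fun x => F (A * (1 - (3 * x ^ 2 - 2 * x ^ 3))) -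
      ∑ k, ![F A, -(3 * (F A * α)), 2 * (F A * α)] k * x ^ (![0, 2, 3] : Fin 3 → ℕ) k)
        =o[𝓝[>] 0] fun x => x ^ 3 := by
    refine hremainder.congr_left fun x => ?_
    simp [Fin.sum_univ_succ]
    ring
  obtain ⟨w, hw, rfl⟩ := exists_three_mul_sq_sub_two_mul_cube_eq hδ
  have hbound := (hF.hasMinorSign_cubic hXY hFcont hA).prod_mul_sub_nonneg
    (y := ![1, 2, 3]) (by decide) hexpand (by simp [Fin.forall_fin_succ]) (by simp; norm_num)
    (by simp [det_fin_three]; norm_num) hw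
  have hproduct : 0 ≤ F A * (6 * (F A * α) ^ 2) * (F A - F A * α * (3 * w ^ 2 - 2 * w ^ 3) -
      F (A * (1 - (3 * w ^ 2 - 2 * w ^ 3)))) := by
    convert hbound using 1
    simp [Fin.sum_univ_succ, Fin.prod_univ_succ]
    ring
  exact sub_nonneg.1 (nonneg_of_mul_nonneg_right hproduct (by positivity))

end PreservesTPToeplitz

theorem eq_one_of_one_sub_mul_le_rpow {α : ℝ} (hpos : ∀ δ ∈ Ioo (0 : ℝ) 1, 0 < 1 - α * δ)
    (hle : ∀ δ ∈ Ioo (0 : ℝ) 1, 1 - α * δ ≤ (1 - δ) ^ α) (hα : 0 < α) : α = 1 := by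
  refine le_antisymm (le_of_not_gt fun hgt => ?_) (le_of_not_gt fun hlt => ?_)
  · have hroot := hpos α⁻¹ ⟨inv_pos.2 hα, inv_lt_one_of_one_lt₀ hgt⟩
    rw [mul_inv_cancel₀ hα.ne', sub_self] at hroot
    exact lt_irrefl 0 hroot
  · have hbernoulli : (1 + (-(1 / 2) : ℝ)) ^ α < 1 + α * (-(1 / 2)) :=
      rpow_one_add_lt_one_add_mul_self (by norm_num) (by norm_num) hα hlt
    have hhalf := hle (1 / 2) (by norm_num)
    rw [← sub_eq_add_neg] at hbernoulli
    linarith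

namespace PreservesTPToeplitz

variable {X Y : Set ℝ} {F : ℝ → ℝ}

theorem continuousOn (hF : PreservesTPToeplitz X Y F) (hXY : AdmissiblePair X Y)
    (hFpos : ∀ x, 0 < x → 0 < F x) : ContinuousOn F (Ioi 0) := by
  have hlog : Continuous fun t => Real.log (F (Real.exp t)) :=
    continuous_of_add_lt_two_mul fun _ _ _ => hF.log_map_exp_add_lt hXY hFpos
  have hconj : ContinuousOn (fun x => Real.exp (Real.log (F (Real.exp (Real.log x))))) (Ioi 0) :=
    Real.continuous_exp.comp_continuousOn <| hlog.comp_continuousOn <|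
      Real.continuousOn_log.mono fun x hx => (mem_Ioi.1 hx).ne'
  exact hconj.congr fun x hx => eq_exp_log_conj hFpos hx

theorem map_mul_one_sub (hF : PreservesTPToeplitz X Y F) (hXY : AdmissiblePair X Y)
    (hFpos : ∀ x, 0 < x → 0 < F x) {A δ : ℝ} (hA : 0 < A) (hδ : δ ∈ Ioo (0 : ℝ) 1) :
    F (A * (1 - δ)) = F A * (1 - δ) := by
  have hlog (u v w : ℝ) (h : v + w < 2 * u) := hF.log_map_exp_add_lt hXY hFpos h
  have hmono : StrictMono fun t => Real.log (F (Real.exp t)) := fun v u hvu => by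
    linarith [hlog u v v (by linarith)]
  have hcont := hF.continuousOn hXY hFpos
  have hFA := hFpos A hA
  obtain ⟨α, hα, hupper, hderiv⟩ :=
    exists_log_derivative hFpos (concaveOn_univ_of_add_lt_two_mul hlog) hmono hA
  have haffine : ∀ δ ∈ Ioo (0 : ℝ) 1, F (A * (1 - δ)) = F A * (1 - α * δ) := fun δ hδ => by
    rw [mul_one_sub (F A), ← mul_assoc]
    exact le_antisymm (hF.map_le_sub_mul hXY hcont hA hFA hα hderiv hupper hδ)
      (hF.sub_mul_le_map hXY hcont hA hFA (mul_pos hFA hα) hderiv hδ)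
  have hα1 : α = 1 := eq_one_of_one_sub_mul_le_rpow
    (fun δ hδ => pos_of_mul_pos_right
      (haffine δ hδ ▸ hFpos _ (mul_pos hA (sub_pos.2 hδ.2))) hFA.le)
    (fun δ hδ => le_of_mul_le_mul_left (haffine δ hδ ▸ hupper δ hδ) hFA) hα
  rw [haffine δ hδ, hα1, one_mul]

theorem map_mul_of_lt_one (hF : PreservesTPToeplitz X Y F) (hXY : AdmissiblePair X Y)
    (hFpos : ∀ x, 0 < x → 0 < F x) {A r : ℝ} (hA : 0 < A) (hr : r ∈ Ioo (0 : ℝ) 1) :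
    F (A * r) = F A * r := by
  simpa using hF.map_mul_one_sub hXY hFpos hA (δ := 1 - r) ⟨sub_pos.2 hr.2, sub_lt_self 1 hr.1⟩

theorem eq_map_one_mul (hF : PreservesTPToeplitz X Y F) (hXY : AdmissiblePair X Y)
    (hFpos : ∀ x, 0 < x → 0 < F x) {x : ℝ} (hx : 0 < x) : F x = F 1 * x := by
  rcases lt_trichotomy x 1 with hlt | rfl | hgt
  · simpa using hF.map_mul_of_lt_one hXY hFpos one_pos ⟨hx, hlt⟩
  · rw [mul_one]
  · have hdown := hF.map_mul_of_lt_one hXY hFpos hx ⟨inv_pos.2 hx, inv_lt_one_of_one_lt₀ hgt⟩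
    rw [mul_inv_cancel₀ hx.ne'] at hdown
    rw [hdown, inv_mul_cancel_right₀ hx.ne']

end PreservesTPToeplitz

theorem stmt_17 (X Y : Set ℝ) (hXY : AdmissiblePair X Y) (F : ℝ → ℝ)
    (hF : ∀ x : ℝ, 0 < x → 0 < F x) :
    (∀ K : X → Y → ℝ, (∃ f : ℝ → ℝ, ∀ (a : X) (b : Y), K a b = f ((a : ℝ) - (b : ℝ))) →
        IsTPKernel K →
        ((∃ g : ℝ → ℝ, ∀ (a : X) (b : Y), F (K a b) = g ((a : ℝ) - (b : ℝ))) ∧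
          IsTPKernel fun a b => F (K a b))) ↔
      ∃ c : ℝ, 0 < c ∧ ∀ x : ℝ, 0 < x → F x = c * x := by
  constructor
  · intro h
    have hpreserves : PreservesTPToeplitz X Y F := fun K hK hTP => (h K hK hTP).2
    exact ⟨F 1, hF 1 one_pos, fun x hx => hpreserves.eq_map_one_mul hXY hF hx⟩
  · rintro ⟨c, hc, hFc⟩ K ⟨f, hf⟩ hTP
    refine ⟨⟨F ∘ f, fun a b => congrArg F (hf a b)⟩, ?_⟩
    have hscale : (fun a b => F (K a b)) = fun a b => c * (1 * K a b) := by
      funext a b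
      rw [one_mul, hFc _ (hTP.pos a b)]
    rw [hscale]
    exact hTP.mul_left_right (fun _ => hc) fun _ => one_pos
end
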